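/- Let G' be a finite simple graph in which every vertex has degree 1 or degree 3, and suppose every bridge of G' is incident to a vertex of degree 1. Then G' admits a proper edge-coloring with 7 colors in which every edge whose two endpoints both have degree 3 is poor or rich. -/

import Mathlib

open SimpleGraph

/-- A proper edge-coloring: distinct edges of `G` sharing an endpoint get different colors. -/
def IsProperEdgeColoring {V C : Type*} (G : SimpleGraph V) (c : Sym2 V → C) : Prop :=
  ∀ e ∈ G.edgeSet, ∀ f ∈ G.edgeSet, e ≠ f → (∃ v : V, v ∈ e ∧ v ∈ f) → c e ≠ c f

/-- `S_c(v)`: the set of colors appearing on edges incident to `v`. -/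
def colorSet {V C : Type*} (G : SimpleGraph V) (c : Sym2 V → C) (v : V) : Set C :=
  c '' G.incidenceSet v

/-- The edge `uv` is poor: exactly 3 colors appear around its endpoints. -/
def IsPoorAt {V C : Type*} (G : SimpleGraph V) (c : Sym2 V → C) (u v : V) : Prop :=
  (colorSet G c u ∪ colorSet G c v).ncard = 3

/-- The edge `uv` is rich: exactly 5 colors appear around its endpoints. -/
def IsRichAt {V C : Type*} (G : SimpleGraph V) (c : Sym2 V → C) (u v : V) : Prop :=
  (colorSet G c u ∪ colorSet G c v).ncard = 5

/-- A normal edge-coloring: a proper edge-coloring in which every edge is poor or rich. -/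
def IsNormalEdgeColoring {V C : Type*} (G : SimpleGraph V) (c : Sym2 V → C) : Prop :=
  IsProperEdgeColoring G c ∧
    ∀ u v : V, G.Adj u v → IsPoorAt G c u v ∨ IsRichAt G c u v

/-- A nowhere-zero flow with values in an additive group `M` (all elements self-inverse in our
applications): nonzero on every edge, and at every vertex the values on incident edges sum to 0. -/
def IsNowhereZeroFlow {V M : Type*} [AddCommMonoid M] (G : SimpleGraph V)
    (θ : Sym2 V → M) : Prop :=
  (∀ e ∈ G.edgeSet, θ e ≠ 0) ∧ ∀ v : V, ∑ᶠ e ∈ G.incidenceSet v, θ e = 0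

/-- `G` is `k`-edge-connected: connected, and still connected after deleting any set of
fewer than `k` edges. -/
def EdgeConnGe {V : Type*} (G : SimpleGraph V) (k : ℕ) : Prop :=
  G.Connected ∧ ∀ s : Set (Sym2 V), s.ncard < k → (G.deleteEdges s).Connected

/-- `G` is cubic: every vertex has degree 3. -/
def IsCubic {V : Type*} (G : SimpleGraph V) : Prop :=
  ∀ v : V, (G.neighborSet v).ncard = 3

/-- `G` is bridgeless: no edge is a bridge. -/
def Bridgeless {V : Type*} (G : SimpleGraph V) : Prop :=
  ∀ e ∈ G.edgeSet, ¬ G.IsBridge e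

/-!
The colours are the seven nonzero elements of `(ℤ/2)³`, i.e. the points of the Fano plane. A
nowhere-zero flow with values in this group is a normal colouring: conservation makes the colours at
a vertex of degree `3` a line, and two lines through a common point have `3` or `5` points in their
union. Conservation is only needed at the vertices of degree `3`, and by Jaeger's `8`-flow theorem
(proved here by Seymour's closure argument) such a flow exists unless a bridge separates off a set
of vertices of degree `3`.

By the hypothesis on bridges, the latter happens only in a component with exactly one leaf. Let `r`
be the neighbour of that leaf. The other vertices of the component form a set `R` joined to the rest
by two edges `k₁` and `k₂`. Their colours must differ at `r`, although a flow on `R` takes the same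
value on both, so conservation has to fail at some vertex, for which the inner end `b` of `k₁` is
taken. Among all sets in the same situation as `R` choose a minimal one. Minimality ensures that
`k₁` forms no two-edge cut with the further edges at the other neighbours `c` and `d` of `b`, and
this allows a flow on `R` whose first coordinate vanishes on the three edges at `b` but on none of
these further edges. After a linear change of colours outside `R`, the edge `k₁` can be given a
colour off the line at `b` for which all three edges at `b` are rich or poor.
-/

open Function Set
open scoped symmDiff

/-- A multigraph given by its incidence maps. The direction from `src` to `tgt` carries no
information: flows are only taken with values in elementary abelian `2`-groups. -/
structure Multigraph (V E : Type*) where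
  /-- One end of an edge. -/
  src : E → V
  /-- The other end of an edge. -/
  tgt : E → V

namespace Multigraph

/-- The group `(ℤ/2)³`. Its seven nonzero elements are the points of the Fano plane and serve as
the colours. -/
abbrev Fano : Type := ZMod 2 × ZMod 2 × ZMod 2

variable {V V' E A B : Type*} (M : Multigraph V E)

/-- The edges with exactly one end in `R`. The star of a vertex `v` is `M.cut {v}`; loops lie in no
cut. -/
def cut (R : Set V) : Set E := {e | ¬(M.src e ∈ R ↔ M.tgt e ∈ R)}

/-- The edges with both ends in `R`. -/
def inside (R : Set V) : Set E := {e | M.src e ∈ R ∧ M.tgt e ∈ R}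

variable {M} {R S T U W X : Set V} {D K : Set E} {e g h : E} {x y z v : V}

theorem mem_cut : e ∈ M.cut R ↔ ¬(M.src e ∈ R ↔ M.tgt e ∈ R) := Iff.rfl

theorem mem_inside : e ∈ M.inside R ↔ M.src e ∈ R ∧ M.tgt e ∈ R := Iff.rfl

theorem cut_symmDiff : M.cut (R ∆ S) = M.cut R ∆ M.cut S := by
  ext e
  simp only [mem_symmDiff, mem_cut]
  tauto

theorem cut_compl : M.cut Rᶜ = M.cut R := by
  ext e
  simp only [mem_cut, mem_compl_iff]
  tauto

theorem cut_empty : M.cut ∅ = ∅ := by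
  ext e
  simp [mem_cut]

theorem exists_mem_cut_singleton (h : e ∈ M.cut R) : ∃ v ∈ R, e ∈ M.cut {v} := by
  rw [mem_cut] at h
  by_cases hs : M.src e ∈ R
  · exact ⟨_, hs, fun h' ↦ h (by simp_all)⟩
  · exact ⟨M.tgt e, by tauto, fun h' ↦ h (by simp_all)⟩

theorem disjoint_inside_cut : Disjoint (M.inside R) (M.cut R) :=
  Set.disjoint_left.2 fun e h h' ↦ h' (by simp [h.1, h.2])

theorem cut_inter_subset : M.cut (S ∩ R) ⊆ M.inside S ∩ M.cut R ∪ M.cut S := by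
  intro e
  simp only [mem_cut, mem_inside, mem_inter_iff, mem_union]
  tauto

theorem cut_sdiff_subset : M.cut (S \ R) ⊆ M.inside S ∩ M.cut R ∪ M.cut S := by
  rw [sdiff_eq, ← cut_compl (R := R)]
  exact cut_inter_subset

theorem notMem_cut_sdiff (h : e ∈ M.cut S) (h' : e ∈ M.cut (S ∩ R)) : e ∉ M.cut (S \ R) := by
  simp only [mem_cut, mem_inter_iff, mem_sdiff] at *
  tauto

theorem mem_cut_of_mem_of_subset (hg : g ∈ M.cut S) (hgx : g ∈ M.cut {x}) (hx : x ∈ R)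
    (hRS : R ⊆ S) : g ∈ M.cut R := by
  simp only [mem_cut, mem_singleton_iff] at *
  grind

variable (M) in
/-- The multigraph obtained by identifying vertices along `π`, with the same edges. -/
def map (π : V → V') : Multigraph V' E := ⟨π ∘ M.src, π ∘ M.tgt⟩

theorem cut_map (π : V → V') (R : Set V') : (M.map π).cut R = M.cut (π ⁻¹' R) := rfl

/-! ### Linkage -/

variable (M D) in
/-- `x` and `y` are joined by a walk using only edges of `D`. -/
def Linked (x y : V) : Prop := Relation.EqvGen (fun u v ↦ ∃ e ∈ D, M.src e = u ∧ M.tgt e = v) x y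

variable (M D x) in
/-- The vertices reached from `x` by walks in `D`. -/
def component : Set V := {y | M.Linked D x y}

namespace Linked

theorem refl : M.Linked D x x := Relation.EqvGen.refl x

theorem symm (h : M.Linked D x y) : M.Linked D y x := Relation.EqvGen.symm _ _ h

theorem trans (h : M.Linked D x y) (h' : M.Linked D y z) : M.Linked D x z :=
  Relation.EqvGen.trans _ _ _ h h'

theorem of_mem (h : e ∈ D) : M.Linked D (M.src e) (M.tgt e) :=
  Relation.EqvGen.rel _ _ ⟨e, h, rfl, rfl⟩

theorem mem_iff (h : M.Linked D x y) (hR : Disjoint D (M.cut R)) : x ∈ R ↔ y ∈ R := by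
  induction h with
  | rel _ _ h =>
    obtain ⟨e, he, rfl, rfl⟩ := h
    exact not_not.1 (Set.disjoint_left.1 hR he)
  | refl => rfl
  | symm _ _ _ ih => exact ih.symm
  | trans _ _ _ _ _ ih ih' => exact ih.trans ih'

theorem exists_mem_cut (h : M.Linked D x y) (hx : x ∈ R) (hy : y ∉ R) : ∃ e ∈ D, e ∈ M.cut R := by
  by_contra! hR
  exact hy ((h.mem_iff (Set.disjoint_left.2 hR)).1 hx)

theorem mono {D' : Set E} (h : M.Linked D x y) (hD : D ⊆ D') : M.Linked D' x y :=
  Relation.EqvGen.mono (fun _ _ ⟨e, he, h⟩ ↦ ⟨e, hD he, h⟩) _ _ h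

end Linked

theorem mem_component : y ∈ M.component D x ↔ M.Linked D x y := Iff.rfl

theorem mem_component_self : x ∈ M.component D x := Linked.refl

theorem disjoint_cut_component : Disjoint D (M.cut (M.component D x)) :=
  Set.disjoint_left.2 fun _ he hc ↦ hc
    ⟨fun h ↦ h.trans (Linked.of_mem he), fun h ↦ h.trans (Linked.of_mem he).symm⟩

theorem Linked.of_mem_cut (he : e ∈ D) (hx : e ∈ M.cut {x}) (hy : e ∈ M.cut {y}) :
    M.Linked D x y := by
  have h := Linked.of_mem (M := M) he
  simp only [mem_cut, mem_singleton_iff] at hx hy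
  by_cases hxs : M.src e = x <;> by_cases hys : M.src e = y
  · exact hxs ▸ hys ▸ Linked.refl
  · obtain rfl : M.tgt e = y := by tauto
    exact hxs ▸ h
  · obtain rfl : M.tgt e = x := by tauto
    exact hys ▸ h.symm
  · obtain rfl : M.tgt e = x := by tauto
    obtain rfl : M.tgt e = y := by tauto
    exact Linked.refl

theorem Linked.inter_component (h : M.Linked D x y) :
    M.Linked (D ∩ M.src ⁻¹' M.component D x) x y := by
  have sub : M.component (D ∩ M.src ⁻¹' M.component D x) x ⊆ M.component D x :=
    fun v hv ↦ Linked.mono hv inter_subset_left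
  have not_crossed : Disjoint D (M.cut (M.component (D ∩ M.src ⁻¹' M.component D x) x)) := by
    refine Set.disjoint_left.2 fun e he hc ↦ hc ⟨fun hs ↦ ?_, fun ht ↦ ?_⟩
    · exact Linked.trans (mem_component.1 hs) (of_mem (mem_inter he (sub hs)))
    · have hs := (mem_component.1 (sub ht)).trans (of_mem he).symm
      exact Linked.trans (mem_component.1 ht) (of_mem (mem_inter he hs)).symm
  exact (h.mem_iff not_crossed).1 mem_component_self

/-! ### Boundaries -/

section Boundary

variable [Fintype E] [AddCommGroup A] [AddCommGroup B]

open Classical in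
variable (M) in
/-- The boundary of a chain `f`: at each vertex, the sum of `f` over the non-loop edges there (a
loop would contribute `2 • f e`, which vanishes for the groups considered). A flow is a chain with
boundary `0`. -/
noncomputable def boundary : (E → A) →+ (V → A) where
  toFun f := ∑ e, (Pi.single (M.src e) (f e) + Pi.single (M.tgt e) (f e))
  map_zero' := by simp
  map_add' f g := by
    simp only [Pi.add_apply, Pi.single_add, ← Finset.sum_add_distrib]
    exact Finset.sum_congr rfl fun e _ ↦ by abel

open Classical in
theorem boundary_def (f : E → A) :
    M.boundary f = ∑ e, (Pi.single (M.src e) (f e) + Pi.single (M.tgt e) (f e)) := rfl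

open Classical in
theorem boundary_single (e : E) (a : A) :
    M.boundary (Pi.single e a) = Pi.single (M.src e) a + Pi.single (M.tgt e) a := by
  rw [boundary_def, Finset.sum_eq_single e] <;> simp +contextual

theorem boundary_comp (φ : A →+ B) (f : E → A) : M.boundary (φ ∘ f) = φ ∘ M.boundary f := by
  ext v
  simp [boundary_def, Finset.sum_apply, Pi.single_apply, apply_ite φ]

theorem boundary_indicator {f : E → A} (h : Disjoint (support f) (M.cut T)) :
    M.boundary ((M.src ⁻¹' T).indicator f) = T.indicator (M.boundary f) := by
  classical
  ext v
  have key (e : E) (hv : v = M.src e ∨ v = M.tgt e) :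
      (M.src ⁻¹' T).indicator f e = if v ∈ T then f e else 0 := by
    by_cases he : f e = 0
    · simp [indicator, he]
    · have := not_not.1 (Set.disjoint_left.1 h (mem_support.2 he))
      obtain rfl | rfl := hv <;> simp [indicator, this]
  simp only [boundary_def, Finset.sum_apply, Pi.add_apply, Pi.single_apply, indicator_apply T]
  split_ifs with hv
  · refine Finset.sum_congr rfl fun e _ ↦ ?_
    split_ifs <;> simp_all
  · refine Finset.sum_eq_zero fun e _ ↦ ?_
    split_ifs <;> simp_all

open Classical in
theorem boundary_map [Fintype V] (π : V → V') (f : E → A) (w : V') :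
    (M.map π).boundary f w = ∑ v with π v = w, M.boundary f v := by
  simp only [boundary_def, Finset.sum_apply, Pi.add_apply, Pi.single_apply]
  rw [Finset.sum_comm]
  refine Finset.sum_congr rfl fun e _ ↦ ?_
  simp [Finset.sum_add_distrib, map, eq_comm (a := w)]

variable [Module (ZMod 2) A]

theorem sum_indicator_boundary [Fintype V] (f : E → A) (R : Set V) :
    ∑ v, R.indicator (M.boundary f) v = ∑ e, (M.cut R).indicator f e := by
  classical
  simp only [boundary_def, indicator_apply, Finset.sum_apply, Pi.add_apply, Pi.single_apply]
  rw [← Finset.sum_filter, Finset.sum_comm]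
  refine Finset.sum_congr rfl fun e _ ↦ ?_
  rw [Finset.sum_add_distrib, Finset.sum_ite_eq', Finset.sum_ite_eq']
  by_cases hs : M.src e ∈ R <;> by_cases ht : M.tgt e ∈ R <;>
    simp [mem_cut, hs, ht, ZModModule.add_self]

theorem boundary_apply (f : E → A) (v : V) :
    M.boundary f v = ∑ e, (M.cut {v}).indicator f e := by
  simp only [boundary_def, Finset.sum_apply, Pi.add_apply, Pi.single_apply]
  refine Finset.sum_congr rfl fun e _ ↦ ?_
  by_cases hs : v = M.src e <;> by_cases ht : v = M.tgt e <;>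
    simp_all [mem_cut, ZModModule.add_self, eq_comm]

theorem sum_indicator_cut_eq_zero [Finite V] {f : E → A} (h : ∀ v ∈ R, M.boundary f v = 0) :
    ∑ e, (M.cut R).indicator f e = 0 := by
  cases nonempty_fintype V
  rw [← sum_indicator_boundary]
  exact Finset.sum_eq_zero fun v _ ↦ by by_cases hv : v ∈ R <;> simp [hv, h]

theorem eq_of_cut_eq_pair [Finite V] {f : E → A} (h : ∀ v ∈ R, M.boundary f v = 0) {g g' : E}
    (hne : g ≠ g') (hR : M.cut R = {g, g'}) : f g = f g' := by
  have hsum := sum_indicator_cut_eq_zero h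
  rw [hR, Finset.sum_eq_add_of_mem g g' (by simp) (by simp) hne (by simp +contextual)] at hsum
  simpa [← ZModModule.sub_eq_add, sub_eq_zero] using hsum

open Classical in
theorem exists_boundary_eq_of_linked (h : M.Linked D x y) (a : A) :
    ∃ f : E → A, support f ⊆ D ∧ M.boundary f = Pi.single x a + Pi.single y a := by
  induction h with
  | rel _ _ h =>
    obtain ⟨e, he, rfl, rfl⟩ := h
    exact ⟨Pi.single e a, Pi.support_single_subset.trans (singleton_subset_iff.2 he),
      boundary_single e a⟩
  | refl => exact ⟨0, by simp, by rw [map_zero, ZModModule.add_self]⟩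
  | symm _ _ _ ih => simpa only [add_comm] using ih
  | trans x y z _ _ ih ih' =>
    obtain ⟨f, hfD, hf⟩ := ih
    obtain ⟨g, hgD, hg⟩ := ih'
    refine ⟨f + g, (support_add f g).trans (union_subset hfD hgD), ?_⟩
    rw [map_add, hf, hg, ZModModule.add_add_add_cancel]

open Classical in
theorem linked_of_boundary_eq [Finite V] {f : E → A} {a : A} (ha : a ≠ 0)
    (hf : M.boundary f = Pi.single x a + Pi.single y a) : M.Linked (support f) x y := by
  cases nonempty_fintype V
  by_contra hxy
  have hsum : ∑ v, (M.component (support f) x).indicator (M.boundary f) v = 0 := by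
    rw [sum_indicator_boundary]
    refine Finset.sum_eq_zero fun e _ ↦ indicator_apply_eq_zero.2 fun he ↦ ?_
    by_contra h0
    exact Set.disjoint_left.1 disjoint_cut_component (mem_support.2 h0) he
  have hx : x ∈ M.component (support f) x := mem_component_self
  have hy : y ∉ M.component (support f) x := hxy
  simp [hf, indicator_apply, Finset.sum_ite, Finset.sum_add_distrib, hx, hy, ha] at hsum

end Boundary

/-! ### Closed trails -/

section ClosedTrail

theorem support_single_add_single_subset {ι A : Type*} [DecidableEq ι] [AddCommGroup A] (x y : ι)
    (a : A) : support (Pi.single x a + Pi.single y a : ι → A) ⊆ {x, y} :=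
  (support_add _ _).trans (union_subset_union Pi.support_single_subset Pi.support_single_subset)

theorem support_add_of_disjoint {ι A : Type*} [AddCommGroup A] {f g : ι → A}
    (h : Disjoint (support f) (support g)) : support (f + g) = support f ∪ support g := by
  refine (support_add f g).antisymm (union_subset (fun i hi ↦ ?_) fun i hi ↦ ?_)
  · have : g i = 0 := by simpa using Set.disjoint_left.1 h hi
    simpa [this] using hi
  · have : f i = 0 := by simpa using Set.disjoint_right.1 h hi
    simpa [this] using hi

theorem linked_indicator_component {A : Type*} [Zero A] {f : E → A}
    (h : M.Linked (support f) x y) :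
    M.Linked (support ((M.src ⁻¹' M.component (support f) x).indicator f)) x y := by
  simpa only [support_indicator, inter_comm] using h.inter_component

variable [Fintype E]

variable (M) in
/-- `Z` is the edge set of a closed trail (a connected even subgraph) with vertex set `W`; a single
vertex with `Z = 0` is allowed. -/
structure IsClosedTrail (Z : E → ZMod 2) (W : Set V) : Prop where
  boundary_eq_zero : M.boundary Z = 0
  support_subset : support Z ⊆ M.inside W
  linked : ∀ x ∈ W, ∀ y ∈ W, M.Linked (support Z) x y

theorem isClosedTrail_singleton (v : V) : M.IsClosedTrail 0 {v} :=
  ⟨map_zero _, by simp, by rintro _ rfl _ rfl; exact Linked.refl⟩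

theorem exists_isClosedTrail_of_flow {C : E → ZMod 2} (hC : M.boundary C = 0) (x : V) :
    ∃ Z, M.IsClosedTrail Z (M.component (support C) x) ∧ support Z ⊆ support C := by
  refine ⟨(M.src ⁻¹' M.component (support C) x).indicator C, ⟨?_, ?_, fun u hu v hv ↦ ?_⟩, ?_⟩
  · rw [boundary_indicator disjoint_cut_component, hC, indicator_zero']
  · rw [support_indicator]
    exact fun e he ↦ ⟨he.1, (mem_component.1 he.1).trans (Linked.of_mem he.2)⟩
  · exact (linked_indicator_component hu).symm.trans (linked_indicator_component hv)
  · exact support_indicator.trans_subset inter_subset_right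

open Classical in
theorem exists_connected_path [Finite V] {C : E → ZMod 2} (h : M.Linked (support C) x y) :
    ∃ P : E → ZMod 2, support P ⊆ support C ∧ M.boundary P = Pi.single x 1 + Pi.single y 1 ∧
      ∀ e ∈ support P, ∀ v, e ∈ M.cut {v} → M.Linked (support P) x v := by
  obtain ⟨Q, hQC, hQ⟩ := exists_boundary_eq_of_linked h (1 : ZMod 2)
  have hxy := linked_of_boundary_eq one_ne_zero hQ
  refine ⟨(M.src ⁻¹' M.component (support Q) x).indicator Q, ?_, ?_, fun e he v hev ↦ ?_⟩
  · exact (support_indicator.trans_subset inter_subset_right).trans hQC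
  · rw [boundary_indicator disjoint_cut_component, hQ, indicator_eq_self]
    exact (support_single_add_single_subset x y _).trans (pair_subset mem_component_self hxy)
  · rw [support_indicator] at he
    refine linked_indicator_component ?_
    have hs : M.Linked (support Q) x (M.src e) := he.1
    have ht := hs.trans (Linked.of_mem he.2)
    simp only [mem_cut, mem_singleton_iff] at hev
    by_cases hv : M.src e = v
    · exact hv ▸ hs
    · obtain rfl : M.tgt e = v := by tauto
      exact ht

open Classical in
/-- Take a path `Q` from `x` to `y` in `C`. If `C + Q` no longer reaches `x` from `z`, then its
component of `z` is even and attached to `Q`, and it may be added to `Q`. -/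
theorem exists_path_through [Finite V] {C : E → ZMod 2} (hC : M.boundary C = 0)
    (hxy : M.Linked (support C) x y) (hzx : M.Linked (support C) z x) :
    ∃ P : E → ZMod 2, support P ⊆ support C ∧ M.boundary P = Pi.single x 1 + Pi.single y 1 ∧
      M.Linked (support P) z x := by
  obtain ⟨Q, hQC, hQ, hQconn⟩ := exists_connected_path hxy
  have hCQ : M.boundary (C + Q) = Pi.single x 1 + Pi.single y 1 := by rw [map_add, hC, hQ, zero_add]
  have hsub : support (C + Q) ⊆ support C := (support_add C Q).trans (union_subset subset_rfl hQC)
  by_cases hz : M.Linked (support (C + Q)) z x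
  · exact ⟨C + Q, hsub, hCQ, hz⟩
  set T := M.component (support (C + Q)) z
  set L := (M.src ⁻¹' T).indicator (C + Q) with hL
  have hxT : x ∉ T := hz
  have hyT : y ∉ T := fun h ↦ hz (h.trans (linked_of_boundary_eq one_ne_zero hCQ).symm)
  have hL0 : M.boundary L = 0 := by
    rw [hL, boundary_indicator disjoint_cut_component, hCQ]
    refine indicator_eq_zero.2 (Disjoint.mono_left (support_single_add_single_subset x y _) ?_)
    exact Set.disjoint_left.2 (by rintro _ (rfl | rfl) <;> assumption)
  have one_of_ne (a : ZMod 2) : a ≠ 0 → a = 1 := by decide +revert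
  have add_eq_zero : ∀ e ∈ support Q, (C + Q) e = 0 := fun e he ↦ by
    rw [Pi.add_apply, one_of_ne _ (hQC he), one_of_ne _ he, ZModModule.add_self]
  have hdisj : Disjoint (support Q) (support L) :=
    Set.disjoint_left.2 fun e he heL ↦ heL (by simp [hL, indicator_apply_eq_zero, add_eq_zero e he])
  have hLsub : support L ⊆ support (C + Q) := support_indicator.trans_subset inter_subset_right
  refine ⟨Q + L, ?_, by rw [map_add, hQ, hL0, add_zero], ?_⟩
  · exact (support_add _ _).trans (union_subset hQC (hLsub.trans hsub))
  rw [support_add_of_disjoint hdisj]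
  obtain ⟨e, heC, heT⟩ := hzx.exists_mem_cut (R := T) mem_component_self hxT
  have heQ : e ∈ support Q := by
    by_contra h
    have hne : (C + Q) e ≠ 0 := by simpa [notMem_support.1 h] using heC
    exact Set.disjoint_left.1 disjoint_cut_component (mem_support.2 hne) heT
  obtain ⟨v, hvT, hev⟩ := exists_mem_cut_singleton heT
  exact ((linked_indicator_component hvT).mono subset_union_right).trans
    ((hQconn e heQ v hev).mono subset_union_left).symm

/-- Some path avoiding both `g` and the trail leads from `z` back to the trail, for otherwise `g`
would be a bridge of `D`. -/
theorem IsClosedTrail.exists_ear {C : E → ZMod 2} {W : Set V} (hC : M.IsClosedTrail C W)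
    (hD : ∀ R g, D ∩ M.cut R ≠ {g}) (hy : y ∈ W) (hgD : g ∈ D) (hg : M.Linked {g} y z) :
    ∃ p ∈ W, M.Linked (D \ (support C ∪ {g})) z p := by
  set X := M.component (D \ (support C ∪ {g})) z
  by_contra! hW
  have hXW : ∀ v ∈ W, v ∉ X := hW
  refine hD X g (Subset.antisymm (fun e ⟨heD, heX⟩ ↦ ?_) (singleton_subset_iff.2 ⟨hgD, ?_⟩))
  · by_contra heg
    have heC : e ∉ support C := fun heC ↦
      have := hC.support_subset heC
      heX (by simp only [hXW _ this.1, hXW _ this.2])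
    exact Set.disjoint_left.1 disjoint_cut_component (mem_sdiff_of_mem heD (by simp_all)) heX
  · obtain ⟨e, rfl, heX⟩ := hg.symm.exists_mem_cut (R := X) mem_component_self (hXW y hy)
    exact heX

variable [Finite V]

theorem IsClosedTrail.exists_extension {C : E → ZMod 2} {W : Set V} (hC : M.IsClosedTrail C W)
    (hCD : support C ⊆ D) (hD : ∀ R g, D ∩ M.cut R ≠ {g}) (hx : x ∈ W) (hy : y ∈ W)
    (hgD : g ∈ D) (hg : M.Linked {g} y z) :
    ∃ Z W', M.IsClosedTrail Z W' ∧ support Z ⊆ D ∧ x ∈ W' ∧ z ∈ W' := by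
  classical
  by_cases hz : z ∈ W
  · exact ⟨C, W, hC, hCD, hx, hz⟩
  have hgC : g ∉ support C := fun h ↦ by
    obtain ⟨_, rfl, hgW⟩ := hg.exists_mem_cut hy hz
    exact Set.disjoint_left.1 disjoint_inside_cut (hC.support_subset h) hgW
  obtain ⟨p, hp, hzp⟩ := hC.exists_ear hD hy hgD hg
  obtain ⟨P, hPC, hP, hxp⟩ := exists_path_through hC.boundary_eq_zero (hC.linked p hp y hy)
    (hC.linked x hx p hp)
  obtain ⟨Q, hQD, hQ⟩ := exists_boundary_eq_of_linked hzp (1 : ZMod 2)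
  obtain ⟨G, hGg, hG⟩ := exists_boundary_eq_of_linked hg (1 : ZMod 2)
  have hflow : M.boundary (Q + P + G) = 0 := by
    rw [map_add, map_add, hP, hQ, hG, ZModModule.add_add_add_cancel, add_comm (Pi.single y 1),
      ZModModule.add_self]
  have hQP : Disjoint (support Q) (support P) :=
    Set.disjoint_left.2 fun e heQ heP ↦ (hQD heQ).2 (.inl (hPC heP))
  have hQPG : Disjoint (support (Q + P)) (support G) := by
    rw [support_add_of_disjoint hQP, disjoint_union_left]
    refine ⟨Set.disjoint_left.2 fun e heQ heG ↦ (hQD heQ).2 (.inr (hGg heG)),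
      Set.disjoint_left.2 fun e heP heG ↦ hgC ?_⟩
    exact hGg heG ▸ hPC heP
  have hsupp : support (Q + P + G) = support Q ∪ support P ∪ support G := by
    rw [support_add_of_disjoint hQPG, support_add_of_disjoint hQP]
  have hxz : M.Linked (support (Q + P + G)) x z := by
    rw [hsupp]
    exact (hxp.mono (subset_union_right.trans subset_union_left)).trans
      ((linked_of_boundary_eq one_ne_zero hQ).symm.mono (subset_union_left.trans subset_union_left))
  obtain ⟨Z, hZ, hZsub⟩ := exists_isClosedTrail_of_flow hflow x
  refine ⟨Z, _, hZ, hZsub.trans (hsupp.trans_subset ?_), mem_component_self, hxz⟩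
  exact union_subset (union_subset (hQD.trans sdiff_subset) (hPC.trans hCD))
    (hGg.trans (singleton_subset_iff.2 hgD))

theorem exists_isClosedTrail (hD : ∀ R g, D ∩ M.cut R ≠ {g}) (h : M.Linked D x y) :
    ∃ Z W, M.IsClosedTrail Z W ∧ support Z ⊆ D ∧ x ∈ W ∧ y ∈ W := by
  set S := {y | ∃ Z W, M.IsClosedTrail Z W ∧ support Z ⊆ D ∧ x ∈ W ∧ y ∈ W}
  have hS : Disjoint D (M.cut S) := by
    have step {g : E} {y z : V} (hgD : g ∈ D) (hg : M.Linked {g} y z) : y ∈ S → z ∈ S := by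
      rintro ⟨C, W, hC, hCD, hx, hy⟩
      exact hC.exists_extension hCD hD hx hy hgD hg
    refine Set.disjoint_left.2 fun g hgD hg ↦ hg ⟨step hgD ?_, step hgD ?_⟩
    · exact Linked.of_mem (mem_singleton g)
    · exact (Linked.of_mem (mem_singleton g)).symm
  exact (h.mem_iff hS).1 ⟨0, {x}, isClosedTrail_singleton x, by simp, rfl, rfl⟩

end ClosedTrail

/-! ### Seymour's construction -/

section Tight

variable (M) in
/-- Any splitting of `B` by at most one edge leaves a union of components of `M` as one of the two
parts. -/
def IsTight (B : Set V) : Prop :=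
  ∀ R, (M.inside B ∩ M.cut R).Subsingleton → M.cut (B ∩ R) = ∅ ∨ M.cut (B \ R) = ∅

theorem isTight_of_minimal (hB : Minimal (fun B ↦ B ⊆ Uᶜ ∧ (M.cut B).Nonempty ∧
    (M.cut B \ M.cut U).Subsingleton) S) : M.IsTight S := by
  intro R hR
  by_contra! hne
  obtain ⟨⟨hSU, -, hSsub⟩, hmin⟩ := hB
  have hcut : (M.cut (S ∩ R) \ M.cut U).Subsingleton ∨ (M.cut (S \ R) \ M.cut U).Subsingleton := by
    by_cases h : ∃ j ∈ M.cut S \ M.cut U, j ∈ M.cut (S ∩ R)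
    · obtain ⟨j, hj, hjR⟩ := h
      refine .inr (hR.anti fun e he ↦ ?_)
      refine (cut_sdiff_subset he.1).resolve_right fun heS ↦ ?_
      exact notMem_cut_sdiff hj.1 hjR (hSsub ⟨heS, he.2⟩ hj ▸ he.1)
    · refine .inl (hR.anti fun e he ↦ ?_)
      exact (cut_inter_subset he.1).resolve_right fun heS ↦ h ⟨e, ⟨heS, he.2⟩, he.1⟩
  obtain h | h := hcut
  · have hsub := hmin ⟨inter_subset_left.trans hSU, hne.1, h⟩ inter_subset_left
    have : S \ R = ∅ := sdiff_eq_empty.2 fun v hv ↦ (hsub hv).2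
    simp [this, cut_empty] at hne
  · have hsub := hmin ⟨sdiff_subset.trans hSU, hne.2, h⟩ sdiff_subset
    have : S ∩ R = ∅ := eq_empty_of_forall_notMem fun v hv ↦ (hsub hv.1).2 hv.2
    simp [this, cut_empty] at hne

end Tight

section Seymour

variable (M) in
/-- No cut has exactly one or two edges (`g = h` is allowed): every connected component is
`3`-edge-connected. -/
def HasNoSmallCut : Prop := ∀ R g h, M.cut R ≠ {g, h}

theorem HasNoSmallCut.cut_eq_empty (hM : M.HasNoSmallCut) {I J : Set E} (hI : I.Subsingleton)
    (hJ : J.Subsingleton) (h : M.cut R ⊆ I ∪ J) : M.cut R = ∅ := by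
  by_contra! hne
  have := hI.finite.to_subtype
  have := hJ.finite.to_subtype
  have hfin : (I ∪ J).Finite := hI.finite.union hJ.finite
  have hcard : (M.cut R).ncard ≤ 2 := (ncard_le_ncard h hfin).trans <| (ncard_union_le I J).trans <|
    add_le_add (ncard_le_one_iff_subsingleton.2 hI) (ncard_le_one_iff_subsingleton.2 hJ)
  have hpos := (ncard_pos (hfin.subset h)).2 hne
  obtain hone | htwo : (M.cut R).ncard = 1 ∨ (M.cut R).ncard = 2 := by omega
  · obtain ⟨g, hg⟩ := ncard_eq_one.1 hone
    exact hM R g g (by rw [hg, pair_eq_singleton])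
  · obtain ⟨g, h, -, hgh⟩ := ncard_eq_two.1 htwo
    exact hM R g h hgh

theorem exists_add_smul_ne_zero {A : Type*} [Finite E] [AddCommGroup A] [Module (ZMod 2) A]
    {D : Set E} {C : E → ZMod 2} (hD : D.ncard < Nat.card A) (hDC : D ⊆ support C) (ψ : E → A) :
    ∃ a : A, ∀ e ∈ D, ψ e + C e • a ≠ 0 := by
  have one_of_ne (c : ZMod 2) : c ≠ 0 → c = 1 := by decide +revert
  obtain ⟨a, ha⟩ : ∃ a, a ∉ ψ '' D := by
    by_contra! h
    have := ncard_image_le D.toFinite (f := ψ)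
    rw [eq_univ_of_forall h, ncard_univ] at this
    omega
  refine ⟨a, fun e he h0 ↦ ha ⟨e, he, ?_⟩⟩
  rwa [one_of_ne _ (hDC he), one_smul, ← ZModModule.sub_eq_add, sub_eq_zero] at h0

variable [Fintype E] {f Z : E → ZMod 2}

variable (M) in
/-- `T` is closed under adding the edges of any even subgraph that has at most `k` edges outside
`T` (Seymour's `k`-closure). -/
def IsKClosed (k : ℕ) (T : Set E) : Prop :=
  ∀ C : E → ZMod 2, M.boundary C = 0 → (support C \ T).ncard ≤ k → support C ⊆ T

theorem exists_flow_ne_zero_off {A : Type*} [AddCommGroup A] [Module (ZMod 2) A] {k : ℕ}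
    (hk : k < Nat.card A) (S : Set E) (hS : ∀ T, S ⊆ T → M.IsKClosed k T → T = univ) :
    ∃ ψ : E → A, M.boundary ψ = 0 ∧ ∀ e ∉ S, ψ e ≠ 0 := by
  induction S using WellFoundedGT.induction with
  | ind S ih =>
    by_cases hcl : M.IsKClosed k S
    · exact ⟨0, map_zero _, fun e he ↦ absurd (hS S subset_rfl hcl ▸ mem_univ e) he⟩
    simp only [IsKClosed, not_forall] at hcl
    obtain ⟨C, hC, hCk, hCS⟩ := hcl
    have hlt : S ⊂ S ∪ support C := left_lt_sup.2 hCS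
    obtain ⟨ψ, hψ, hψ0⟩ := ih _ hlt fun T hT ↦ hS T (subset_union_left.trans hT)
    obtain ⟨a, ha⟩ := exists_add_smul_ne_zero (hCk.trans_lt hk) sdiff_subset ψ
    let smulA : ZMod 2 →+ A := (LinearMap.toSpanSingleton (ZMod 2) A a).toAddMonoidHom
    refine ⟨ψ + smulA ∘ C, ?_, fun e he ↦ ?_⟩
    · rw [map_add, boundary_comp, hψ, hC, zero_add]
      exact funext fun _ ↦ map_zero smulA
    · by_cases heC : e ∈ support C
      · exact ha e ⟨heC, he⟩
      · simpa [notMem_support.1 heC] using hψ0 e (by simp_all)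

variable (M) in
/-- An even subgraph `f` of `M.inside U` whose `2`-closures link all of `U`. Seymour's construction
enlarges `U` to the whole vertex set, where `f` becomes the first coordinate of a flow. -/
structure IsSpanningFrame (U : Set V) (f : E → ZMod 2) : Prop where
  boundary_eq_zero : M.boundary f = 0
  support_subset : support f ⊆ M.inside U
  linked : ∀ T, M.IsKClosed 2 T → support f ⊆ T →
    ∀ x ∈ U, ∀ y ∈ U, M.Linked univ x y → M.Linked T x y

open Classical in
theorem boundary_single_of_mem_cut {A : Type*} [AddCommGroup A] (hx : g ∈ M.cut {x})
    (hy : g ∈ M.cut {y}) (hxy : x ≠ y) (a : A) :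
    M.boundary (Pi.single g a) = Pi.single x a + Pi.single y a := by
  simp only [mem_cut, mem_singleton_iff] at hx hy
  rw [boundary_single]
  by_cases hs : M.src g = x
  · obtain rfl : M.tgt g = y := by grind
    rw [hs]
  · obtain rfl : M.tgt g = x := by tauto
    obtain rfl : M.src g = y := by grind
    rw [add_comm]

theorem IsKClosed.support_subset {k : ℕ} (hD : M.IsKClosed k D) {F h : E → ZMod 2}
    (hF : (support F).ncard ≤ k) (hhD : support h ⊆ D) (hFh : M.boundary F = M.boundary h) :
    support F ⊆ D := by
  have hflow : M.boundary (F + h) = 0 := by rw [map_add, hFh, ZModModule.add_self]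
  have hsub : support (F + h) \ D ⊆ support F := by
    rintro e ⟨he, heD⟩
    simpa [notMem_support.1 fun h' ↦ heD (hhD h')] using he
  intro e he
  by_contra heD
  refine heD (hD _ hflow ((ncard_le_ncard hsub).trans hF) ?_)
  simpa [notMem_support.1 fun h' ↦ heD (hhD h')] using he

theorem IsKClosed.mem_of_linked {k : ℕ} (hD : M.IsKClosed k D) (hk : 1 ≤ k)
    (h : M.Linked D (M.src e) (M.tgt e)) : e ∈ D := by
  classical
  obtain ⟨C, hCD, hC⟩ := exists_boundary_eq_of_linked h (1 : ZMod 2)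
  have hcard : (support (Pi.single e (1 : ZMod 2))).ncard ≤ k := by
    simpa [Pi.support_single_of_ne] using hk
  refine hD.support_subset hcard hCD (by rw [hC, boundary_single]) ?_
  simp

theorem IsSpanningFrame.eq_univ (hf : M.IsSpanningFrame univ f) (hD : M.IsKClosed 2 D)
    (hfD : support f ⊆ D) : D = univ :=
  eq_univ_of_forall fun _ ↦ hD.mem_of_linked one_le_two
    (hf.linked D hD hfD _ trivial _ trivial (Linked.of_mem trivial))

theorem IsSpanningFrame.exists_flow (hf : M.IsSpanningFrame univ f) :
    ∃ φ : E → Fano, M.boundary φ = 0 ∧ (∀ e, φ e ≠ 0) ∧ ∀ e, (φ e).1 = f e := by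
  obtain ⟨ψ, hψ, hψ0⟩ := exists_flow_ne_zero_off (M := M) (A := ZMod 2 × ZMod 2) (k := 2) (by simp)
    (support f) fun T hfT hT ↦ hf.eq_univ hT hfT
  refine ⟨AddMonoidHom.inl _ _ ∘ f + AddMonoidHom.inr _ _ ∘ ψ, ?_, fun e he ↦ ?_, by simp⟩
  · rw [map_add, boundary_comp, boundary_comp, hf.boundary_eq_zero, hψ]
    ext v <;> simp
  · have : f e = 0 ∧ ψ e = 0 := by simpa using he
    exact hψ0 e (by simpa using this.1) this.2

/-- Paths in `D` inside `U` and inside `W` complete `g₁` and `g₂` to an even subgraph, which has at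
most two edges outside `D`. -/
theorem IsKClosed.exists_mem_cut (hD : M.IsKClosed 2 D) {g₁ g₂ : E} (hne : g₁ ≠ g₂)
    (hUW : Disjoint U W) (h₁ : g₁ ∈ M.cut U ∩ M.cut W) (h₂ : g₂ ∈ M.cut U ∩ M.cut W)
    (hU : ∀ x ∈ U, ∀ y ∈ U, M.Linked univ x y → M.Linked D x y)
    (hW : ∀ x ∈ W, ∀ y ∈ W, M.Linked D x y) : g₁ ∈ D := by
  classical
  obtain ⟨u₁, hu₁, hgu₁⟩ := exists_mem_cut_singleton h₁.1
  obtain ⟨w₁, hw₁, hgw₁⟩ := exists_mem_cut_singleton h₁.2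
  obtain ⟨u₂, hu₂, hgu₂⟩ := exists_mem_cut_singleton h₂.1
  obtain ⟨w₂, hw₂, hgw₂⟩ := exists_mem_cut_singleton h₂.2
  have hw := hW w₁ hw₁ w₂ hw₂
  have hu := hU u₁ hu₁ u₂ hu₂ <| (Linked.of_mem_cut (mem_univ g₁) hgu₁ hgw₁).trans <|
    (hw.mono (subset_univ D)).trans (Linked.of_mem_cut (mem_univ g₂) hgw₂ hgu₂)
  obtain ⟨P, hPD, hP⟩ := exists_boundary_eq_of_linked hu (1 : ZMod 2)
  obtain ⟨Q, hQD, hQ⟩ := exists_boundary_eq_of_linked hw (1 : ZMod 2)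
  have hcard : (support (Pi.single g₁ 1 + Pi.single g₂ 1 : E → ZMod 2)).ncard ≤ 2 :=
    (ncard_le_ncard (support_single_add_single_subset g₁ g₂ _)).trans (ncard_pair hne).le
  have hPQ : support (P + Q) ⊆ D := (support_add P Q).trans (union_subset hPD hQD)
  refine hD.support_subset hcard hPQ ?_ ?_
  · rw [map_add, map_add, hP, hQ,
      boundary_single_of_mem_cut hgu₁ hgw₁ (hUW.ne_of_mem hu₁ hw₁),
      boundary_single_of_mem_cut hgu₂ hgw₂ (hUW.ne_of_mem hu₂ hw₂)]
    abel
  · simp [hne]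

theorem IsSpanningFrame.union (hf : M.IsSpanningFrame U f) (hZ : M.IsClosedTrail Z W)
    (hUW : Disjoint U W) (hcut : M.cut U = ∅ ∨ (M.cut U ∩ M.cut W).Nontrivial) :
    M.IsSpanningFrame (U ∪ W) (f + Z) := by
  have hfZ : Disjoint (support f) (support Z) := Set.disjoint_left.2 fun e he he' ↦
    hUW.ne_of_mem (hf.support_subset he).1 (hZ.support_subset he').1 rfl
  refine ⟨by rw [map_add, hf.boundary_eq_zero, hZ.boundary_eq_zero, add_zero], ?_, ?_⟩
  · refine (support_add f Z).trans (union_subset (hf.support_subset.trans ?_)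
      (hZ.support_subset.trans ?_)) <;> rintro e ⟨hs, ht⟩
    exacts [⟨.inl hs, .inl ht⟩, ⟨.inr hs, .inr ht⟩]
  intro D hD hsub
  rw [support_add_of_disjoint hfZ, union_subset_iff] at hsub
  have hU := hf.linked D hD hsub.1
  have hW x (hx : x ∈ W) y (hy : y ∈ W) : M.Linked D x y := (hZ.linked x hx y hy).mono hsub.2
  have hcross u (hu : u ∈ U) w (hw : w ∈ W) (huw : M.Linked univ u w) : M.Linked D u w := by
    obtain hcut | ⟨g₁, h₁, g₂, h₂, hne⟩ := hcut
    · have hwU := (huw.mem_iff (by simp [hcut])).1 hu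
      exact absurd rfl (hUW.ne_of_mem hwU hw)
    have hg₁ := hD.exists_mem_cut hne hUW h₁ h₂ hU hW
    obtain ⟨u₁, hu₁, hgu₁⟩ := exists_mem_cut_singleton h₁.1
    obtain ⟨w₁, hw₁, hgw₁⟩ := exists_mem_cut_singleton h₁.2
    have hlink := Linked.of_mem_cut hg₁ hgu₁ hgw₁
    have hu₁w := hlink.trans (hW w₁ hw₁ w hw)
    exact (hU u hu u₁ hu₁ (huw.trans (hu₁w.mono (subset_univ D)).symm)).trans hu₁w
  rintro x (hx | hx) y (hy | hy) hxy
  exacts [hU x hx y hy hxy, hcross x hx y hy hxy, (hcross y hy x hx hxy.symm).symm, hW x hx y hy]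

variable [Finite V]

theorem IsTight.exists_isClosedTrail (hS : M.IsTight S) {g₁ g₂ : E} (hg₁ : g₁ ∈ M.cut S)
    (hg₂ : g₂ ∈ M.cut S) (hx : x ∈ S) (hy : y ∈ S) (hgx : g₁ ∈ M.cut {x}) (hgy : g₂ ∈ M.cut {y}) :
    ∃ Z W, M.IsClosedTrail Z W ∧ W ⊆ S ∧ x ∈ W ∧ y ∈ W := by
  have bridgeless R g : M.inside S ∩ M.cut R ≠ {g} := fun h ↦ by
    have hg : g ∈ M.inside S ∩ M.cut R := h ▸ rfl
    simp only [mem_inside, mem_cut, mem_inter_iff] at hg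
    obtain h | h := hS R (h ▸ subsingleton_singleton)
    all_goals
      refine (h ▸ notMem_empty g : g ∉ _) ?_
      simp only [mem_cut, mem_inter_iff, mem_sdiff]
      tauto
  have linked : M.Linked (M.inside S) x y := by
    by_contra hxy
    set R := M.component (M.inside S) x
    obtain h | h := hS R (by rw [disjoint_cut_component.inter_eq]; exact subsingleton_empty)
    · exact (h ▸ notMem_empty g₁ : g₁ ∉ _)
        (mem_cut_of_mem_of_subset hg₁ hgx (mem_inter hx mem_component_self) inter_subset_left)
    · exact (h ▸ notMem_empty g₂ : g₂ ∉ _)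
        (mem_cut_of_mem_of_subset hg₂ hgy (mem_sdiff_of_mem hy hxy) sdiff_subset)
  obtain ⟨Z, W, hZ, hZS, hxW, hyW⟩ :=
    Multigraph.exists_isClosedTrail bridgeless linked
  refine ⟨Z, W, hZ, fun w hw ↦ ?_, hxW, hyW⟩
  exact (((hZ.linked x hxW w hw).mono hZS).mem_iff disjoint_inside_cut).1 hx

theorem HasNoSmallCut.exists_isClosedTrail (hM : M.HasNoSmallCut) (hU : (M.cut U).Nonempty) :
    ∃ Z W, M.IsClosedTrail Z W ∧ W.Nonempty ∧ Disjoint U W ∧ (M.cut U ∩ M.cut W).Nontrivial := by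
  obtain ⟨S, hS⟩ := (toFinite {B | B ⊆ Uᶜ ∧ (M.cut B).Nonempty ∧
    (M.cut B \ M.cut U).Subsingleton}).exists_minimal ⟨Uᶜ, by simp [cut_compl, hU]⟩
  have htight : M.IsTight S := isTight_of_minimal hS
  obtain ⟨⟨hSU, hne, hsub⟩, -⟩ := hS
  have htwo : (M.cut U ∩ M.cut S).Nontrivial := by
    by_contra h
    refine hne.ne_empty (hM.cut_eq_empty (not_nontrivial_iff.1 h) hsub fun e he ↦ ?_)
    by_cases heU : e ∈ M.cut U
    exacts [.inl ⟨heU, he⟩, .inr ⟨he, heU⟩]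
  obtain ⟨g₁, h₁, g₂, h₂, hne⟩ := htwo
  obtain ⟨x, hx, hgx⟩ := exists_mem_cut_singleton h₁.2
  obtain ⟨y, hy, hgy⟩ := exists_mem_cut_singleton h₂.2
  obtain ⟨Z, W, hZ, hWS, hxW, hyW⟩ := htight.exists_isClosedTrail h₁.2 h₂.2 hx hy hgx hgy
  refine ⟨Z, W, hZ, ⟨x, hxW⟩, disjoint_compl_right.mono_right (hWS.trans hSU), g₁, ⟨h₁.1, ?_⟩, g₂,
    ⟨h₂.1, ?_⟩, hne⟩
  exacts [mem_cut_of_mem_of_subset h₁.2 hgx hxW hWS, mem_cut_of_mem_of_subset h₂.2 hgy hyW hWS]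

theorem IsSpanningFrame.exists_univ (hM : M.HasNoSmallCut) (hf : M.IsSpanningFrame U f) :
    ∃ f', M.IsSpanningFrame univ f' ∧ ∀ e ∉ M.inside Uᶜ, f' e = f e := by
  induction U using WellFoundedGT.induction generalizing f with
  | ind U ih =>
    obtain rfl | hU := eq_or_ne U univ
    · exact ⟨f, hf, fun _ _ ↦ rfl⟩
    obtain ⟨Z, W, hZ, ⟨w, hw⟩, hUW, hcut⟩ : ∃ Z W, M.IsClosedTrail Z W ∧ W.Nonempty ∧
        Disjoint U W ∧ (M.cut U = ∅ ∨ (M.cut U ∩ M.cut W).Nontrivial) := by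
      obtain hcut | hcut := (M.cut U).eq_empty_or_nonempty
      · obtain ⟨v, hv⟩ := (ne_univ_iff_exists_notMem U).1 hU
        exact ⟨0, {v}, isClosedTrail_singleton v, by simp, by simpa, .inl hcut⟩
      · obtain ⟨Z, W, hZ, hW, hUW, h⟩ := hM.exists_isClosedTrail hcut
        exact ⟨Z, W, hZ, hW, hUW, .inr h⟩
    have hlt : U < U ∪ W := left_lt_sup.2 fun h ↦ hUW.ne_of_mem (h hw) hw rfl
    obtain ⟨f', hf', hff'⟩ := ih _ hlt (hf.union hZ hUW hcut)
    refine ⟨f', hf', fun e he ↦ ?_⟩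
    have hZe : Z e = 0 := by
      by_contra h
      have := hZ.support_subset (mem_support.2 h)
      exact he ⟨hUW.notMem_of_mem_right this.1, hUW.notMem_of_mem_right this.2⟩
    rw [hff' e fun h ↦ he ⟨fun h' ↦ h.1 (.inl h'), fun h' ↦ h.2 (.inl h')⟩, Pi.add_apply, hZe,
      add_zero]

end Seymour

/-! ### Contracting parallel edges -/

section Contraction

variable (M) in
/-- No edge is a cut with one side inside `X`. For `X = univ` this says that `M` has no bridge. -/
def IsBridgelessOn (X : Set V) : Prop := ∀ R ⊆ X, ∀ g, M.cut R ≠ {g}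

variable (M) in
/-- `g` and `h` form a cut with one side inside `X`; a flow on `X` then agrees on `g` and `h`. -/
def ParallelOn (X : Set V) (g h : E) : Prop := ∃ R ⊆ X, M.cut R = {g, h}

theorem ParallelOn.symm (hgh : M.ParallelOn X g h) : M.ParallelOn X h g := by
  obtain ⟨R, hR, h⟩ := hgh
  exact ⟨R, hR, h.trans (pair_comm _ _)⟩

instance : Std.Symm fun g h ↦ ¬M.ParallelOn X g h := ⟨fun _ _ h h' ↦ h h'.symm⟩

variable (M D) in
/-- The equivalence relation of being linked in `D`. -/
def linkedSetoid : Setoid V :=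
  ⟨M.Linked D, fun _ ↦ Linked.refl, Linked.symm, Linked.trans⟩

variable (M K) in
/-- The multigraph obtained by contracting all edges outside `K`, which become loops. -/
def contract : Multigraph (Quotient (M.linkedSetoid Kᶜ)) E := M.map (Quotient.mk _)

theorem contract_cut_subset (R : Set (Quotient (M.linkedSetoid Kᶜ))) :
    (M.contract K).cut R ⊆ K := by
  intro e he
  by_contra heK
  refine he (iff_of_eq (congrArg (· ∈ R) (Quotient.sound ?_)))
  exact Linked.of_mem heK

theorem contract_hasNoSmallCut (hM : M.IsBridgelessOn univ)
    (hK : K.Pairwise fun g h ↦ ¬M.ParallelOn univ g h) : (M.contract K).HasNoSmallCut := by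
  intro R g h hR
  have hsub := hR ▸ contract_cut_subset R
  rw [contract, cut_map] at hR
  obtain rfl | hgh := eq_or_ne g h
  · exact hM _ (subset_univ _) g (hR.trans (pair_eq_singleton g))
  · exact hK (hsub (.inl rfl)) (hsub (.inr rfl)) hgh ⟨_, subset_univ _, hR⟩

theorem exists_maximal_pairwise_not_parallelOn [Finite E]
    (hK : K.Pairwise fun g h ↦ ¬M.ParallelOn X g h) :
    ∃ K' ⊇ K, Maximal (fun K : Set E ↦ K.Pairwise fun g h ↦ ¬M.ParallelOn X g h) K' :=
  (toFinite _).exists_le_maximal hK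

variable [Fintype E]

theorem isSpanningFrame_singleton (v : V) : M.IsSpanningFrame {v} 0 :=
  ⟨map_zero _, by simp, by rintro T - - _ rfl _ rfl -; exact Linked.refl⟩

theorem isSpanningFrame_empty : M.IsSpanningFrame ∅ 0 :=
  ⟨map_zero _, by simp, by simp⟩

variable [AddCommGroup A] [Module (ZMod 2) A]

open Classical in
theorem exists_boundary_eq_of_sum_eq_zero [Fintype V] {β : V → A}
    (hβ : ∀ w, ∑ v with Quotient.mk (M.linkedSetoid D) v = w, β v = 0) :
    ∃ η : E → A, support η ⊆ D ∧ M.boundary η = β := by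
  let rep (v : V) : V := (Quotient.mk (M.linkedSetoid D) v).out
  have hrep v : M.Linked D v (rep v) :=
    Linked.symm (Quotient.mk_out (s := M.linkedSetoid D) v)
  choose η hηD hη using fun v ↦ exists_boundary_eq_of_linked (hrep v) (β v)
  refine ⟨∑ v, η v, ?_, ?_⟩
  · intro e
    contrapose!
    intro he
    rw [notMem_support, Finset.sum_apply]
    exact Finset.sum_eq_zero fun v _ ↦ notMem_support.1 fun h ↦ he (hηD v h)
  · have hzero : (∑ v, Pi.single (rep v) (β v) : V → A) = 0 := by
      ext u
      simp only [Finset.sum_apply, Pi.single_apply, ← Finset.sum_filter, Pi.zero_apply]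
      by_cases hu : ∃ w, rep w = u
      · obtain ⟨w, rfl⟩ := hu
        simpa [rep, eq_comm] using hβ (Quotient.mk _ w)
      · exact Finset.sum_eq_zero fun v hv ↦ absurd ⟨v, by simp_all⟩ hu
    rw [map_sum, Finset.sum_congr rfl fun v _ ↦ hη v, Finset.sum_add_distrib, hzero, add_zero]
    exact Finset.univ_sum_single β

variable [Finite V]

theorem ParallelOn.apply_eq {f : E → A} (hgh : M.ParallelOn X g h)
    (hf : ∀ v ∈ X, M.boundary f v = 0) : f g = f h := by
  obtain ⟨R, hRX, hR⟩ := hgh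
  obtain rfl | hne := eq_or_ne g h
  · rfl
  · exact eq_of_cut_eq_pair (fun v hv ↦ hf v (hRX hv)) hne hR

theorem exists_flow_of_contract {f' : E → A} (hf' : (M.contract K).boundary f' = 0) :
    ∃ f : E → A, M.boundary f = 0 ∧ ∀ e ∈ K, f e = f' e := by
  cases nonempty_fintype V
  have hind w : (M.contract K).boundary (K.indicator f') w = 0 := by
    refine Eq.trans ?_ (congrFun hf' w)
    rw [boundary_apply, boundary_apply]
    refine Finset.sum_congr rfl fun e _ ↦ ?_
    rw [indicator_indicator, inter_eq_left.2 (contract_cut_subset _)]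
  obtain ⟨η, hηK, hη⟩ := exists_boundary_eq_of_sum_eq_zero (M := M) (D := Kᶜ)
    (β := M.boundary (K.indicator f')) fun w ↦ by
      convert (boundary_map _ _ w).symm.trans (hind w)
  refine ⟨K.indicator f' + η, by rw [map_add, hη, ZModModule.add_self], fun e he ↦ ?_⟩
  have : η e = 0 := notMem_support.1 fun h ↦ hηK h he
  simp [he, this]

/-- By maximality an edge outside `K` is parallel to one in `K`, so it receives no new value. -/
theorem exists_flow_of_contract_of_maximal
    (hK : Maximal (fun K : Set E ↦ K.Pairwise fun g h ↦ ¬M.ParallelOn univ g h) K) {f' : E → A}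
    (hf' : (M.contract K).boundary f' = 0) :
    ∃ f : E → A, M.boundary f = 0 ∧ (∀ e ∈ K, f e = f' e) ∧ ∀ e, ∃ k ∈ K, f e = f' k := by
  obtain ⟨f, hf, hfK⟩ := exists_flow_of_contract hf'
  refine ⟨f, hf, hfK, fun e ↦ ?_⟩
  by_cases he : e ∈ K
  · exact ⟨e, he, hfK e he⟩
  obtain ⟨k, hk, hek⟩ : ∃ k ∈ K, M.ParallelOn univ e k := by
    by_contra! h
    refine he (hK.2 (hK.1.insert_of_symm fun k hk _ ↦ h k hk)
      (subset_insert e K) (mem_insert e K))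
  exact ⟨k, hk, hfK k hk ▸ hek.apply_eq fun v _ ↦ congrFun hf v⟩

/-- Jaeger's `8`-flow theorem, in the form with values in `(ℤ/2)³`. -/
theorem IsBridgelessOn.exists_flow_ne_zero_univ (hM : M.IsBridgelessOn univ) :
    ∃ f : E → Fano, M.boundary f = 0 ∧ ∀ e, f e ≠ 0 := by
  obtain ⟨K, -, hK⟩ := exists_maximal_pairwise_not_parallelOn (M := M) (X := univ)
    (pairwise_empty _)
  obtain ⟨f₁, hf₁, -⟩ := isSpanningFrame_empty.exists_univ (contract_hasNoSmallCut hM hK.1)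
  obtain ⟨f', hf', hne, -⟩ := hf₁.exists_flow
  obtain ⟨f, hf, -, hval⟩ := exists_flow_of_contract_of_maximal hK hf'
  refine ⟨f, hf, fun e ↦ ?_⟩
  obtain ⟨k, -, hk⟩ := hval e
  exact hk ▸ hne k

end Contraction

section Collapse

variable (M X) in
open Classical in
/-- The multigraph obtained by identifying all vertices outside `X` to the single vertex `none`.
Flows on it are the chains on `M` whose boundary vanishes on `X`. -/
noncomputable def collapse : Multigraph (Option V) E :=
  M.map fun v ↦ if v ∈ X then some v else none

theorem exists_cut_eq_collapse_cut (R : Set (Option V)) :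
    ∃ S ⊆ X, M.cut S = (M.collapse X).cut R := by
  classical
  by_cases hR : none ∈ R
  · refine ⟨((fun v ↦ if v ∈ X then some v else none) ⁻¹' R)ᶜ, fun v hv ↦ ?_, cut_compl⟩
    by_contra hvX
    simp [hvX, hR] at hv
  · refine ⟨(fun v ↦ if v ∈ X then some v else none) ⁻¹' R, fun v hv ↦ ?_, rfl⟩
    by_contra hvX
    simp [hvX, hR] at hv

theorem collapse_cut_singleton (hv : v ∈ X) : (M.collapse X).cut {some v} = M.cut {v} := by
  rw [collapse, cut_map]
  congr 1
  ext u
  by_cases hu : u ∈ X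
  · simp [hu]
  · simpa [hu] using fun h : u = v ↦ hu (h ▸ hv)

theorem IsBridgelessOn.collapse (hX : M.IsBridgelessOn X) :
    (M.collapse X).IsBridgelessOn univ := by
  intro R _ g hR
  obtain ⟨S, hSX, hS⟩ := M.exists_cut_eq_collapse_cut (X := X) R
  exact hX S hSX g (hS.trans hR)

theorem ParallelOn.of_collapse (h : (M.collapse X).ParallelOn univ e g) :
    M.ParallelOn X e g := by
  obtain ⟨R, -, hR⟩ := h
  obtain ⟨S, hSX, hS⟩ := M.exists_cut_eq_collapse_cut (X := X) R
  exact ⟨S, hSX, hS.trans hR⟩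

variable [Fintype E]

theorem collapse_boundary [AddCommGroup A] (f : E → A) (hv : v ∈ X) :
    (M.collapse X).boundary f (some v) = M.boundary f v := by
  classical
  have hproj u : some v = (if u ∈ X then some u else none) ↔ v = u := by grind
  simp [boundary_def, Finset.sum_apply, Pi.single_apply, collapse, map, hproj]

theorem IsBridgelessOn.exists_flow_ne_zero [Finite V] (hX : M.IsBridgelessOn X) :
    ∃ f : E → Fano, (∀ v ∈ X, M.boundary f v = 0) ∧ ∀ e, f e ≠ 0 := by
  obtain ⟨f, hf, hne⟩ := hX.collapse.exists_flow_ne_zero_univ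
  exact ⟨f, fun v hv ↦ collapse_boundary f hv ▸ congrFun hf (some v), hne⟩

end Collapse

/-! ### Claws -/

section Claw

variable (M) in
/-- The vertex `v` is incident with exactly three edges, the distinct edges `e₀`, `e₁`, `e₂`. -/
structure IsClaw (v : V) (e₀ e₁ e₂ : E) : Prop where
  cut_eq : M.cut {v} = {e₀, e₁, e₂}
  ne₀₁ : e₀ ≠ e₁
  ne₀₂ : e₀ ≠ e₂
  ne₁₂ : e₁ ≠ e₂

variable {b c d : V} {e₀ e₁ e₂ c₁ c₂ d₁ d₂ : E}

namespace IsClaw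

theorem swap (hv : M.IsClaw v e₀ e₁ e₂) : M.IsClaw v e₀ e₂ e₁ :=
  ⟨hv.cut_eq.trans (congrArg _ (pair_comm _ _)), hv.ne₀₂, hv.ne₀₁, hv.ne₁₂.symm⟩

theorem rotate (hv : M.IsClaw v e₀ e₁ e₂) : M.IsClaw v e₁ e₂ e₀ :=
  ⟨hv.cut_eq.trans (by grind), hv.ne₁₂, hv.ne₀₁.symm, hv.ne₀₂.symm⟩

theorem mem₀ (hv : M.IsClaw v e₀ e₁ e₂) : e₀ ∈ M.cut {v} := hv.cut_eq ▸ .inl rfl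

theorem mem₁ (hv : M.IsClaw v e₀ e₁ e₂) : e₁ ∈ M.cut {v} := hv.rotate.mem₀

theorem mem₂ (hv : M.IsClaw v e₀ e₁ e₂) : e₂ ∈ M.cut {v} := hv.swap.mem₁

theorem exists_of_mem (hv : M.IsClaw v e₀ e₁ e₂) (he : e ∈ M.cut {v}) :
    ∃ g h, M.IsClaw v e g h := by
  rw [hv.cut_eq] at he
  obtain rfl | rfl | rfl := he
  exacts [⟨_, _, hv⟩, ⟨_, _, hv.rotate⟩, ⟨_, _, hv.rotate.rotate⟩]

theorem not_parallelOn (hM : M.IsBridgelessOn univ) (hv : M.IsClaw v e₀ e₁ e₂) :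
    ¬M.ParallelOn univ e₀ e₁ := by
  rintro ⟨R, -, hR⟩
  refine hM (R ∆ {v}) (subset_univ _) e₂ ?_
  obtain ⟨hcut, _, _, _⟩ := hv
  rw [cut_symmDiff, hR, hcut]
  grind

theorem pairwise_not_parallelOn (hM : M.IsBridgelessOn univ) (hv : M.IsClaw v e₀ e₁ e₂) :
    (M.cut {v}).Pairwise fun g h ↦ ¬M.ParallelOn univ g h := by
  intro g hg h hh hne
  obtain ⟨e, e', hv⟩ := hv.exists_of_mem hg
  rw [hv.cut_eq] at hh
  obtain rfl | rfl | rfl := hh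
  exacts [absurd rfl hne, hv.not_parallelOn hM, hv.swap.not_parallelOn hM]

open Classical in
theorem collapse (hv : M.IsClaw v e₀ e₁ e₂) (hvX : v ∈ X) :
    (M.collapse X).IsClaw (some v) e₀ e₁ e₂ :=
  ⟨(collapse_cut_singleton hvX).trans hv.cut_eq, hv.ne₀₁, hv.ne₀₂, hv.ne₁₂⟩

end IsClaw

theorem IsClaw.parallelOn_of_parallelOn (hb : M.IsClaw b e₀ e₁ e₂) (hc : M.IsClaw c e₁ c₁ c₂)
    (h₁ : e₀ ≠ c₁) (h₂ : e₀ ≠ c₂) (h : e₂ ≠ c₁) (hp : M.ParallelOn univ e₂ c₁) :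
    M.ParallelOn univ e₀ c₂ := by
  obtain ⟨R, -, hR⟩ := hp
  refine ⟨R ∆ {b} ∆ {c}, subset_univ _, ?_⟩
  obtain ⟨hbcut, _, _, _⟩ := hb
  obtain ⟨hccut, _, _, _⟩ := hc
  rw [cut_symmDiff, cut_symmDiff, hR, hbcut, hccut]
  grind

theorem IsClaw.pairwise_not_parallelOn_union (hM : M.IsBridgelessOn univ)
    (hb : M.IsClaw b e₀ e₁ e₂) (hc : M.IsClaw c e₁ c₁ c₂)
    (he₀ : ∀ g ∈ ({c₁, c₂} : Set E), e₀ ≠ g ∧ ¬M.ParallelOn univ e₀ g) :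
    (M.cut {b} ∪ M.cut {c}).Pairwise fun g h ↦ ¬M.ParallelOn univ g h := by
  refine pairwise_union_of_symm.2 ⟨hb.pairwise_not_parallelOn hM, hc.pairwise_not_parallelOn hM,
    fun g hg h hh hne hp ↦ ?_⟩
  obtain ⟨h₁, hp₁⟩ := he₀ c₁ (.inl rfl)
  obtain ⟨h₂, hp₂⟩ := he₀ c₂ (.inr rfl)
  by_cases hgc : g ∈ M.cut {c}
  · exact hc.pairwise_not_parallelOn hM hgc hh hne hp
  by_cases hhb : h ∈ M.cut {b}
  · exact hb.pairwise_not_parallelOn hM hg hhb hne hp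
  rw [hb.cut_eq] at hg hhb
  rw [hc.cut_eq] at hh hgc
  obtain rfl | rfl : g = e₀ ∨ g = e₂ := by grind
  all_goals obtain rfl | rfl : h = c₁ ∨ h = c₂ := by grind
  · exact hp₁ hp
  · exact hp₂ hp
  · exact hp₂ (hb.parallelOn_of_parallelOn hc h₁ h₂ hne hp)
  · exact hp₁ (hb.parallelOn_of_parallelOn hc.swap h₂ h₁ hne hp)

theorem IsClaw.pairwise_not_parallelOn_union_union (hM : M.IsBridgelessOn univ)
    (hb : M.IsClaw b e₀ e₁ e₂) (hc : M.IsClaw c e₁ c₁ c₂) (hd : M.IsClaw d e₂ d₁ d₂)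
    (he₀ : ∀ g ∈ ({c₁, c₂, d₁, d₂} : Set E), e₀ ≠ g ∧ ¬M.ParallelOn univ e₀ g)
    (hcd : ∀ g ∈ ({c₁, c₂} : Set E), ∀ h ∈ ({d₁, d₂} : Set E), ¬M.ParallelOn univ g h) :
    (M.cut {b} ∪ M.cut {c} ∪ M.cut {d}).Pairwise fun g h ↦ ¬M.ParallelOn univ g h := by
  have hbc := hb.pairwise_not_parallelOn_union hM hc (by grind)
  have hbd := hb.swap.pairwise_not_parallelOn_union hM hd (by grind)
  refine pairwise_union_of_symm.2 ⟨hbc, hd.pairwise_not_parallelOn hM, fun g hg h hh hne ↦ ?_⟩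
  by_cases hgb : g ∈ M.cut {b}
  · exact hbd (.inl hgb) (.inr hh) hne
  by_cases hhb : h ∈ M.cut {b}
  · exact hbc hg (.inl hhb) hne
  have hgc := hg.resolve_left hgb
  rw [hc.cut_eq] at hgc
  rw [hd.cut_eq] at hh
  exact hcd g (hgc.resolve_left fun h' ↦ hgb (h' ▸ hb.mem₁)) h
    (hh.resolve_left fun h' ↦ hhb (h' ▸ hb.mem₂))

theorem contract_mk_eq_mk (hK : M.cut {v} ⊆ K) :
    Quotient.mk (M.linkedSetoid Kᶜ) x = Quotient.mk _ v ↔ x = v := by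
  refine ⟨fun h ↦ ?_, fun h ↦ h ▸ rfl⟩
  by_contra hne
  have hlink : M.Linked Kᶜ x v := Quotient.exact h
  obtain ⟨e, heK, he⟩ := hlink.symm.exists_mem_cut (R := {v}) rfl hne
  exact heK (hK he)

theorem contract_cut_singleton (hK : M.cut {v} ⊆ K) :
    (M.contract K).cut {Quotient.mk _ v} = M.cut {v} := by
  rw [contract, cut_map]
  congr 1
  ext x
  exact contract_mk_eq_mk hK

theorem contract_mem_cut_singleton (hx : e ∈ M.cut {x}) (hv : e ∈ M.cut {v})
    (hxv : x ≠ v) (hK : M.cut {v} ⊆ K) : e ∈ (M.contract K).cut {Quotient.mk _ x} := by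
  have hv' := contract_cut_singleton hK ▸ hv
  have hne : Quotient.mk (M.linkedSetoid Kᶜ) x ≠ Quotient.mk _ v :=
    fun h ↦ hxv ((contract_mk_eq_mk hK).1 h)
  rw [contract, cut_map] at *
  simp only [mem_cut, mem_preimage, mem_singleton_iff] at *
  grind

theorem HasNoSmallCut.isTight_compl_singleton (hM : M.HasNoSmallCut)
    (hb : M.IsClaw b e₀ e₁ e₂) : M.IsTight {b}ᶜ := by
  intro R hR
  have hcut : M.cut {b}ᶜ = {e₀, e₁, e₂} := cut_compl.trans hb.cut_eq
  have hside : (M.cut {b}ᶜ ∩ M.cut ({b}ᶜ ∩ R)).Subsingleton ∨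
      (M.cut {b}ᶜ ∩ M.cut ({b}ᶜ \ R)).Subsingleton := by
    have hdisj {e} (he : e ∈ M.cut {b}ᶜ) := notMem_cut_sdiff (R := R) he
    rw [hcut] at hdisj ⊢
    simp only [Set.Subsingleton]
    grind
  refine hside.imp (fun h ↦ ?_) (fun h ↦ ?_)
  · exact hM.cut_eq_empty hR h fun e he ↦ (cut_inter_subset he).imp_right (⟨·, he⟩)
  · exact hM.cut_eq_empty hR h fun e he ↦ (cut_sdiff_subset he).imp_right (⟨·, he⟩)

variable [Fintype E]

theorem IsClaw.boundary_apply [AddCommGroup A] [Module (ZMod 2) A] (hv : M.IsClaw v e₀ e₁ e₂)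
    (f : E → A) : M.boundary f v = f e₀ + f e₁ + f e₂ := by
  classical
  have hcut : M.cut {v} = ({e₀, e₁, e₂} : Finset E) := by simp [hv.cut_eq]
  rw [Multigraph.boundary_apply, hcut, Finset.sum_indicator_subset _ (Finset.subset_univ _),
    Finset.sum_insert (by simp [hv.ne₀₁, hv.ne₀₂]), Finset.sum_pair hv.ne₁₂, add_assoc]

theorem IsClaw.fst_ne_zero {φ : E → Fano} (hv : M.IsClaw v e₀ e₁ e₂)
    (hφ : M.boundary φ v = 0) (h₀ : (φ e₀).1 = 0) (hg : g ∈ M.cut {v}) (hg0 : (φ g).1 ≠ 0) :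
    (φ e₁).1 ≠ 0 ∧ (φ e₂).1 ≠ 0 := by
  have hsum := congrArg Prod.fst (hv.boundary_apply φ ▸ hφ)
  simp only [Prod.fst_add, h₀, zero_add, Prod.fst_zero, add_eq_zero_iff_eq_neg,
    ZModModule.neg_eq_self] at hsum
  rw [hv.cut_eq] at hg
  obtain rfl | rfl | rfl := hg
  · exact absurd h₀ hg0
  · exact ⟨hg0, hsum ▸ hg0⟩
  · exact ⟨hsum ▸ hg0, hg0⟩

variable [Finite V]

theorem HasNoSmallCut.exists_flow_of_isClaw (hM : M.HasNoSmallCut) (hb : M.IsClaw b e₀ e₁ e₂)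
    (hc : e₁ ∈ M.cut {c}) (hd : e₂ ∈ M.cut {d}) (hbc : b ≠ c) (hbd : b ≠ d) (hcd : c ≠ d) :
    ∃ φ : E → Fano, M.boundary φ = 0 ∧ (∀ e, φ e ≠ 0) ∧
      (∀ e ∈ M.cut {b}, (φ e).1 = 0) ∧ (∃ g ∈ M.cut {c}, (φ g).1 ≠ 0) ∧
      ∃ g ∈ M.cut {d}, (φ g).1 ≠ 0 := by
  have hbcut : ∀ e ∈ M.cut {b}, e ∈ M.cut {b}ᶜ := fun e he ↦ by rwa [cut_compl]
  obtain ⟨Z, W, hZ, hWb, hcW, hdW⟩ := (hM.isTight_compl_singleton hb).exists_isClosedTrail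
    (hbcut _ hb.mem₁) (hbcut _ hb.mem₂) hbc.symm hbd.symm hc hd
  have hbW : b ∉ W := fun h ↦ hWb h rfl
  have hcutW {x g} (hx : x ∈ W) (hgx : g ∈ M.cut {x}) (hgb : g ∈ M.cut {b}) : g ∈ M.cut W :=
    mem_cut_of_mem_of_subset (hbcut _ hgb) hgx hx hWb
  have hframe := (isSpanningFrame_singleton b).union hZ (disjoint_singleton_left.2 hbW) <| .inr
    ⟨e₁, ⟨hb.mem₁, hcutW hcW hc hb.mem₁⟩, e₂, ⟨hb.mem₂, hcutW hdW hd hb.mem₂⟩, hb.ne₁₂⟩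
  obtain ⟨f, hf, hfZ⟩ := hframe.exists_univ hM
  obtain ⟨φ, hφ, hφ0, hφf⟩ := hf.exists_flow
  have hφZ {x e} (hx : x ∈ {b} ∪ W) (he : e ∈ M.cut {x}) : (φ e).1 = Z e := by
    rw [hφf, hfZ, zero_add]
    simp only [mem_cut, mem_singleton_iff, mem_inside, mem_compl_iff] at *
    grind
  have hedge {x y} (hx : x ∈ W) (hy : y ∈ W) (hxy : y ≠ x) :
      ∃ g ∈ M.cut {x}, (φ g).1 ≠ 0 := by
    obtain ⟨g, hgZ, hgx⟩ := (hZ.linked x hx y hy).exists_mem_cut (R := {x}) rfl hxy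
    exact ⟨g, hgx, hφZ (.inr hx) hgx ▸ hgZ⟩
  refine ⟨φ, hφ, hφ0, fun e he ↦ ?_, hedge hcW hdW hcd.symm, hedge hdW hcW hcd⟩
  rw [hφZ (.inl rfl) he]
  by_contra heZ
  have heW := hZ.support_subset heZ
  simp only [mem_cut, mem_singleton_iff, mem_inside] at he heW
  grind

theorem exists_flow_of_pairwise_not_parallelOn (hM : M.IsBridgelessOn univ)
    (hK : K.Pairwise fun g h ↦ ¬M.ParallelOn univ g h) (hb : M.IsClaw b e₀ e₁ e₂)
    (hc : e₁ ∈ M.cut {c}) (hd : e₂ ∈ M.cut {d}) (hbc : b ≠ c) (hbd : b ≠ d) (hcd : c ≠ d)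
    (hbK : M.cut {b} ⊆ K) (hcK : M.cut {c} ⊆ K) :
    ∃ φ : E → Fano, M.boundary φ = 0 ∧ (∀ e, φ e ≠ 0) ∧
      (∀ e ∈ M.cut {b}, (φ e).1 = 0) ∧ (∃ g ∈ M.cut {c}, (φ g).1 ≠ 0) ∧
      (M.cut {d} ⊆ K → ∃ g ∈ M.cut {d}, (φ g).1 ≠ 0) := by
  obtain ⟨K', hKK', hK'⟩ := exists_maximal_pairwise_not_parallelOn hK
  have hbcut := contract_cut_singleton (hbK.trans hKK')
  have hccut := contract_cut_singleton (hcK.trans hKK')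
  obtain ⟨φ', hφ', hφ0, hφb, ⟨g, hgc, hg⟩, hφd⟩ :=
    (contract_hasNoSmallCut hM hK'.1).exists_flow_of_isClaw
      ⟨hbcut.trans hb.cut_eq, hb.ne₀₁, hb.ne₀₂, hb.ne₁₂⟩ (hccut ▸ hc)
      (contract_mem_cut_singleton hd hb.mem₂ hbd.symm (hbK.trans hKK'))
      (fun h ↦ hbc ((contract_mk_eq_mk (hcK.trans hKK')).1 h))
      (fun h ↦ hbd.symm ((contract_mk_eq_mk (hbK.trans hKK')).1 h.symm))
      (fun h ↦ hcd.symm ((contract_mk_eq_mk (hcK.trans hKK')).1 h.symm))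
  obtain ⟨φ, hφ, hφK, hval⟩ := exists_flow_of_contract_of_maximal hK' hφ'
  refine ⟨φ, hφ, fun e ↦ ?_, fun e he ↦ ?_, ⟨g, hccut ▸ hgc, ?_⟩, fun hdK ↦ ?_⟩
  · obtain ⟨k, -, hk⟩ := hval e
    exact hk ▸ hφ0 k
  · exact hφK e (hKK' (hbK he)) ▸ hφb e (hbcut ▸ he)
  · rwa [hφK g (hKK' (hcK (hccut ▸ hgc)))]
  · obtain ⟨g, hgd, hg⟩ := hφd
    rw [contract_cut_singleton (hdK.trans hKK')] at hgd
    exact ⟨g, hgd, hφK g (hKK' (hdK hgd)) ▸ hg⟩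

theorem IsClaw.exists_flow (hM : M.IsBridgelessOn univ)
    (hb : M.IsClaw b e₀ e₁ e₂) (hc : M.IsClaw c e₁ c₁ c₂) (hd : M.IsClaw d e₂ d₁ d₂)
    (hbc : b ≠ c) (hbd : b ≠ d) (hcd : c ≠ d)
    (he₀ : ∀ g ∈ ({c₁, c₂, d₁, d₂} : Set E), e₀ ≠ g ∧ ¬M.ParallelOn univ e₀ g) :
    ∃ φ : E → Fano, M.boundary φ = 0 ∧ (∀ e, φ e ≠ 0) ∧
      (∀ e ∈ M.cut {b}, (φ e).1 = 0) ∧ ∀ g ∈ ({c₁, c₂, d₁, d₂} : Set E), (φ g).1 ≠ 0 := by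
  by_cases hcross : ∀ g ∈ ({c₁, c₂} : Set E), ∀ h ∈ ({d₁, d₂} : Set E), ¬M.ParallelOn univ g h
  · obtain ⟨φ, hφ, hφ0, hφb, ⟨g, hg, hφg⟩, hφd⟩ := exists_flow_of_pairwise_not_parallelOn hM
      (hb.pairwise_not_parallelOn_union_union hM hc hd he₀ hcross) hb hc.mem₀ hd.mem₀ hbc hbd hcd
      (subset_union_left.trans subset_union_left) (subset_union_right.trans subset_union_left)
    obtain ⟨h, hh, hφh⟩ := hφd subset_union_right
    have hφc := hc.fst_ne_zero (congrFun hφ c) (hφb e₁ hb.mem₁) hg hφg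
    have hφd := hd.fst_ne_zero (congrFun hφ d) (hφb e₂ hb.mem₂) hh hφh
    exact ⟨φ, hφ, hφ0, hφb, by grind⟩
  · push Not at hcross
    obtain ⟨g, hg, h, hh, hgh⟩ := hcross
    obtain ⟨φ, hφ, hφ0, hφb, ⟨k, hk, hφk⟩, -⟩ := exists_flow_of_pairwise_not_parallelOn hM
      (hb.pairwise_not_parallelOn_union hM hc (by grind)) hb hc.mem₀ hd.mem₀ hbc hbd hcd
      subset_union_left subset_union_right
    have hφc := hc.fst_ne_zero (congrFun hφ c) (hφb e₁ hb.mem₁) hk hφk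
    have hφh : φ g = φ h := hgh.apply_eq fun v _ ↦ congrFun hφ v
    have hφd := hd.fst_ne_zero (congrFun hφ d) (hφb e₂ hb.mem₂) (g := h)
      (hd.cut_eq ▸ .inr hh) (by grind)
    exact ⟨φ, hφ, hφ0, hφb, by grind⟩

theorem IsClaw.exists_flowOn (hX : M.IsBridgelessOn X)
    (hb : M.IsClaw b e₀ e₁ e₂) (hc : M.IsClaw c e₁ c₁ c₂) (hd : M.IsClaw d e₂ d₁ d₂)
    (hbX : b ∈ X) (hcX : c ∈ X) (hdX : d ∈ X) (hbc : b ≠ c) (hbd : b ≠ d) (hcd : c ≠ d)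
    (he₀ : ∀ g ∈ ({c₁, c₂, d₁, d₂} : Set E), e₀ ≠ g ∧ ¬M.ParallelOn X e₀ g) :
    ∃ φ : E → Fano, (∀ v ∈ X, M.boundary φ v = 0) ∧ (∀ e, φ e ≠ 0) ∧
      (∀ e ∈ M.cut {b}, (φ e).1 = 0) ∧ ∀ g ∈ ({c₁, c₂, d₁, d₂} : Set E), (φ g).1 ≠ 0 := by
  obtain ⟨φ, hφ, hφ0, hφb, hφg⟩ := (hb.collapse hbX).exists_flow hX.collapse (hc.collapse hcX)
    (hd.collapse hdX) (by simpa) (by simpa) (by simpa)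
    fun g hg ↦ ⟨(he₀ g hg).1, fun hp ↦ (he₀ g hg).2 hp.of_collapse⟩
  exact ⟨φ, fun v hv ↦ collapse_boundary φ hv ▸ congrFun hφ (some v), hφ0,
    collapse_cut_singleton (M := M) hbX ▸ hφb, hφg⟩

end Claw

/-! ### Lines of the Fano plane -/

section Fano

theorem exists_linearEquiv_apply_eq {A : Type*} [AddCommGroup A] [Module (ZMod 2) A]
    {a b a' b' : A} (ha : a ≠ 0) (hb : b ≠ 0) (hab : a ≠ b) (ha' : a' ≠ 0) (hb' : b' ≠ 0)
    (hab' : a' ≠ b') : ∃ φ : A ≃ₗ[ZMod 2] A, φ a = a' ∧ φ b = b' := by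
  have hmk {x y : A} (hx : x ≠ 0) (hy : y ≠ 0) :
      Projectivization.mk (ZMod 2) x hx = Projectivization.mk (ZMod 2) y hy ↔ x = y := by
    simp [Projectivization.mk_eq_mk_iff, Subsingleton.elim _ (1 : (ZMod 2)ˣ), eq_comm]
  obtain ⟨φ, hφ⟩ := MulAction.is_two_pretransitive_iff.1
    (Projectivization.linearEquiv_is_two_pretransitive (ZMod 2) A)
    ((hmk ha hb).not.2 hab) ((hmk ha' hb').not.2 hab')
  simp only [Projectivization.smul_mk, hmk] at hφ
  exact ⟨φ, hφ⟩

theorem exists_linearEquiv_fano {a a' : Fano} (ha : a ≠ 0) (ha' : a' ≠ 0) :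
    ∃ φ : Fano ≃ₗ[ZMod 2] Fano, φ a = a' := by
  have hex : ∀ a : Fano, ∃ b, b ≠ 0 ∧ a ≠ b := by decide
  obtain ⟨b, hb, hab⟩ := hex a
  obtain ⟨b', hb', hab'⟩ := hex a'
  obtain ⟨φ, hφ, -⟩ := exists_linearEquiv_apply_eq ha hb hab ha' hb' hab'
  exact ⟨φ, hφ⟩

/-- The union of the two colour sets has the size required of the ends of a poor or rich edge. -/
def IsNormalPair {α : Type*} (X Y : Set α) : Prop := (X ∪ Y).ncard = 3 ∨ (X ∪ Y).ncard = 5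

theorem IsNormalPair.symm {α : Type*} {X Y : Set α} (h : IsNormalPair X Y) : IsNormalPair Y X := by
  rwa [IsNormalPair, union_comm]

/-- The line of the Fano plane through the points `a` and `b`. -/
def fanoLine (a b : Fano) : Finset Fano := {a, b, a + b}

/-- `X` is a line of the Fano plane through the point `a`. -/
def IsLineThrough (a : Fano) (X : Set Fano) : Prop :=
  a ≠ 0 ∧ ∃ b, b ≠ 0 ∧ b ≠ a ∧ X = fanoLine a b

theorem IsLineThrough.eq_fanoLine {a a' : Fano} {L : Set Fano} (hL : IsLineThrough a L)
    (ha' : a' ∈ L) (hne : a' ≠ a) : L = fanoLine a a' := by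
  obtain ⟨-, b, -, -, rfl⟩ := hL
  simp only [fanoLine, Finset.coe_insert, Finset.coe_singleton, mem_insert_iff,
    mem_singleton_iff] at ha' ⊢
  obtain rfl | rfl | rfl := ha'
  · exact absurd rfl hne
  · rfl
  · rw [← add_assoc, ZModModule.add_self, zero_add, pair_comm]

theorem isNormalPair_coe {α : Type*} [DecidableEq α] {X Y : Finset α} :
    IsNormalPair (X : Set α) Y ↔ (X ∪ Y).card = 3 ∨ (X ∪ Y).card = 5 := by
  rw [IsNormalPair, ← Finset.coe_union, ncard_coe_finset]

instance {α : Type*} [DecidableEq α] (X Y : Finset α) : Decidable (IsNormalPair (X : Set α) Y) :=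
  decidable_of_iff _ isNormalPair_coe.symm

theorem IsLineThrough.ncard_eq_three {a : Fano} {X : Set Fano} (h : IsLineThrough a X) :
    X.ncard = 3 := by
  obtain ⟨ha, b, hb, hba, rfl⟩ := h
  rw [ncard_coe_finset]
  revert a b
  decide +kernel

set_option synthInstance.maxSize 512 in
theorem IsLineThrough.isNormalPair {a : Fano} {X Y : Set Fano} (hX : IsLineThrough a X)
    (hY : IsLineThrough a Y) : IsNormalPair X Y := by
  obtain ⟨ha, b, hb, hba, rfl⟩ := hX
  obtain ⟨-, c, hc, hca, rfl⟩ := hY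
  revert a b c
  decide +kernel

set_option synthInstance.maxSize 512 in
/-- Any `y` off the line at infinity through `p`, `q` with `y ∉ {s, p + s}` and `y ∉ {t, q + t}`
will do, and the last two conditions exclude all but one of the four affine points. -/
theorem exists_isNormalPair : ∀ p q s t : Fano, p ≠ 0 → q ≠ 0 → p ≠ q → p.1 = 0 → q.1 = 0 →
    s.1 ≠ 0 → t.1 ≠ 0 → ∃ y, y ≠ 0 ∧ y ≠ p + q ∧ ({y, p, q} : Finset Fano).card = 3 ∧
      IsNormalPair ({y, p, q} : Finset Fano) (fanoLine p s : Set Fano) ∧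
      IsNormalPair ({y, p, q} : Finset Fano) (fanoLine q t : Set Fano) ∧
      IsNormalPair ({y, p, q} : Finset Fano) (fanoLine y (p + q) : Set Fano) := by
  decide +kernel

end Fano

/-! ### Normal colourings -/

section Colouring

variable (M) in
/-- Every vertex of `X` is incident with exactly three edges. -/
def IsCubicOn (X : Set V) : Prop := ∀ v ∈ X, ∃ e₀ e₁ e₂, M.IsClaw v e₀ e₁ e₂

variable (M) in
/-- No two vertices of `X` are joined by more than one edge. -/
def IsSimpleOn (X : Set V) : Prop :=
  ∀ v ∈ X, ∀ w ∈ X, v ≠ w → (M.cut {v} ∩ M.cut {w}).Subsingleton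

variable (M) in
/-- `col` colours the edges with points of the Fano plane so that, for the vertices of `X`, it is
proper and every edge between two of them is poor or rich. Properness is expressed by the number of
colours, which suffices at vertices of degree `3`. -/
structure IsNormalOn (X : Set V) (col : E → Fano) : Prop where
  ne_zero : ∀ e, col e ≠ 0
  ncard_eq_three : ∀ v ∈ X, (col '' M.cut {v}).ncard = 3
  isNormalPair : ∀ v ∈ X, ∀ w ∈ X, v ≠ w → ∀ e ∈ M.cut {v}, e ∈ M.cut {w} →
    IsNormalPair (col '' M.cut {v}) (col '' M.cut {w})

variable {b : V} {e₀ e₁ e₂ : E} {f : E → Fano}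

theorem IsClaw.image_cut {α : Type*} (hv : M.IsClaw v e₀ e₁ e₂) (f : E → α) :
    f '' M.cut {v} = {f e₀, f e₁, f e₂} := by
  rw [hv.cut_eq, image_insert_eq, image_pair]

theorem IsCubicOn.exists_isClaw (hX : M.IsCubicOn X) (hv : v ∈ X) (he : e ∈ M.cut {v}) :
    ∃ g h, M.IsClaw v e g h := by
  obtain ⟨e₀, e₁, e₂, hclaw⟩ := hX v hv
  exact hclaw.exists_of_mem he

theorem IsCubicOn.isNormalOn (hX : M.IsCubicOn X) (hf0 : ∀ e, f e ≠ 0)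
    (hline : ∀ v ∈ X, v ≠ b → ∀ e ∈ M.cut {v}, IsLineThrough (f e) (f '' M.cut {v}))
    (hcard : (f '' M.cut {b}).ncard = 3)
    (hpair : ∀ w ∈ X, b ≠ w → ∀ e ∈ M.cut {b}, e ∈ M.cut {w} →
      IsNormalPair (f '' M.cut {b}) (f '' M.cut {w})) : M.IsNormalOn X f := by
  refine ⟨hf0, fun v hv ↦ ?_, fun v hv w hw hvw e hev hew ↦ ?_⟩
  · obtain rfl | hvb := eq_or_ne v b
    · exact hcard
    · obtain ⟨e₀, e₁, e₂, hclaw⟩ := hX v hv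
      exact (hline v hv hvb _ hclaw.mem₀).ncard_eq_three
  · obtain rfl | hvb := eq_or_ne v b
    · exact hpair w hw hvw e hev hew
    obtain rfl | hwb := eq_or_ne w b
    · exact (hpair v hv hvw.symm e hew hev).symm
    exact (hline v hv hvb e hev).isNormalPair (hline w hw hwb e hew)

variable [Fintype E]

theorem IsClaw.apply_eq_add [AddCommGroup A] [Module (ZMod 2) A] {f : E → A}
    (hv : M.IsClaw v e₀ e₁ e₂) (hf : M.boundary f v = 0) : f e₂ = f e₀ + f e₁ := by
  rw [hv.boundary_apply, add_eq_zero_iff_eq_neg, ZModModule.neg_eq_self] at hf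
  exact hf.symm

theorem IsClaw.isLineThrough (hv : M.IsClaw v e₀ e₁ e₂) (hf : M.boundary f v = 0)
    (h₀ : f e₀ ≠ 0) (h₁ : f e₁ ≠ 0) (h₂ : f e₂ ≠ 0) :
    IsLineThrough (f e₀) (f '' M.cut {v}) := by
  have hsum := hv.apply_eq_add hf
  refine ⟨h₀, f e₁, h₁, fun h ↦ h₂ ?_, ?_⟩
  · rw [hsum, h, ZModModule.add_self]
  · simp [hv.image_cut, hsum, fanoLine]

theorem IsCubicOn.isLineThrough (hX : M.IsCubicOn X) (hf : ∀ e, f e ≠ 0) (hv : v ∈ X)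
    (hfv : M.boundary f v = 0) (he : e ∈ M.cut {v}) :
    IsLineThrough (f e) (f '' M.cut {v}) := by
  obtain ⟨g, h, hclaw⟩ := hX.exists_isClaw hv he
  exact hclaw.isLineThrough hfv (hf _) (hf _) (hf _)

end Colouring

theorem IsBridgelessOn.exists_isNormalOn [Finite V] [Finite E] (hM : M.IsBridgelessOn X)
    (hX : M.IsCubicOn X) : ∃ col, M.IsNormalOn X col := by
  cases nonempty_fintype E
  obtain ⟨f, hf, hf0⟩ := hM.exists_flow_ne_zero
  have hline {v e} (hv : v ∈ X) (he : e ∈ M.cut {v}) :=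
    hX.isLineThrough hf0 hv (hf v hv) he
  refine ⟨f, hf0, fun v hv ↦ ?_, fun v hv w hw _ e hev hew ↦ ?_⟩
  · obtain ⟨e₀, e₁, e₂, hclaw⟩ := hX v hv
    exact (hline hv hclaw.mem₀).ncard_eq_three
  · exact (hline hv hev).isNormalPair (hline hw hew)

/-! ### Growing a colouring -/

section Seed

variable {b c d : V} {e₀ e₁ e₂ c₁ c₂ d₁ d₂ k₁ k₂ : E} {f : E → Fano}

theorem mem_cut_of_mem_of_notMem (hx : e ∈ M.cut {x}) (hy : e ∈ M.cut {y}) (hxR : x ∈ R)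
    (hyR : y ∉ R) : e ∈ M.cut R := by
  simp only [mem_cut, mem_singleton_iff] at *
  grind

theorem eq_of_mem_cut (he : e ∈ M.cut R) (hx : e ∈ M.cut {x}) (hy : e ∈ M.cut {y}) (hxR : x ∈ R)
    (hyR : y ∈ R) : x = y := by
  simp only [mem_cut, mem_singleton_iff] at *
  grind

theorem eq_of_mem_cut_of_ne (hx : e ∈ M.cut {x}) (hy : e ∈ M.cut {y}) (hz : e ∈ M.cut {z})
    (hxy : x ≠ y) (hxz : x ≠ z) : y = z := by
  simp only [mem_cut, mem_singleton_iff] at *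
  grind

theorem exists_mem_sdiff_of_mem_cut (hTR : T ⊆ R) (he : e ∈ M.cut T) (heR : e ∉ M.cut R) :
    ∃ v ∈ R \ T, e ∈ M.cut {v} := by
  obtain ⟨v, hvT, hev⟩ := exists_mem_cut_singleton (M := M) (R := Tᶜ) (cut_compl.symm ▸ he)
  obtain ⟨w, hwT, hew⟩ := exists_mem_cut_singleton he
  exact ⟨v, ⟨by_contra (heR <| mem_cut_of_mem_of_notMem hew hev (hTR hwT) ·), hvT⟩, hev⟩

theorem boundary_congr [Fintype E] [AddCommGroup A] [Module (ZMod 2) A] {f f' : E → A}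
    (h : EqOn f f' (M.cut {v})) : M.boundary f v = M.boundary f' v := by
  rw [boundary_apply, boundary_apply, indicator_congr h]

theorem exists_glue {α : Type*} (f k : E → α) (hR : M.cut R = {k₁, k₂}) (hbR : b ∈ R)
    (hb : k₁ ∈ M.cut {b}) (h₂ : f k₂ = k k₂) :
    ∃ col : E → α, (∀ e, col e = f e ∨ col e = k e) ∧ (∀ v ∉ R, EqOn col f (M.cut {v})) ∧
      (∀ v ∈ R, v ≠ b → EqOn col k (M.cut {v})) ∧ col k₁ = f k₁ ∧
      ∀ e ∈ M.cut {b}, e ≠ k₁ → col e = k e := by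
  classical
  have hk₁ : k₁ ∈ M.cut R := hR ▸ .inl rfl
  let col (e : E) : α := if (∃ v ∈ R, e ∈ M.cut {v}) ∧ e ≠ k₁ then k e else f e
  have hcol {e v} (hv : v ∈ R) (he : e ∈ M.cut {v}) (hne : e ≠ k₁) : col e = k e :=
    if_pos ⟨⟨v, hv, he⟩, hne⟩
  refine ⟨col, fun e ↦ (ite_eq_or_eq _ _ _).symm, fun v hv e he ↦ ?_, fun v hv hvb e he ↦ ?_,
    if_neg (·.2 rfl), fun e ↦ hcol hbR⟩
  · by_cases hew : (∃ w ∈ R, e ∈ M.cut {w}) ∧ e ≠ k₁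
    · obtain ⟨⟨w, hw, hew'⟩, hne⟩ := id hew
      have heR := mem_cut_of_mem_of_notMem hew' he hw hv
      rw [hR] at heR
      obtain rfl := heR.resolve_left hne
      exact (if_pos hew).trans h₂.symm
    · exact if_neg hew
  · exact hcol hv he fun h ↦ hvb (eq_of_mem_cut hk₁ (h ▸ he) hb hv hbR)

namespace IsClaw

theorem notMem_cut_of_subsingleton (hb : M.IsClaw b e₀ e₁ e₂) (hc : M.IsClaw c e₁ c₁ c₂)
    (hbc : (M.cut {b} ∩ M.cut {c}).Subsingleton) :
    e₂ ∉ M.cut {c} ∧ c₂ ∉ M.cut {b} ∧ e₀ ∉ M.cut {c} ∧ c₁ ∉ M.cut {b} := by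
  have hjoin {e} (heb : e ∈ M.cut {b}) (hec : e ∈ M.cut {c}) : e = e₁ :=
    hbc ⟨heb, hec⟩ ⟨hb.mem₁, hc.mem₀⟩
  exact ⟨fun h ↦ hb.ne₁₂ (hjoin hb.mem₂ h).symm, fun h ↦ hc.ne₀₂ (hjoin h hc.mem₂).symm,
    fun h ↦ hb.ne₀₁ (hjoin hb.mem₀ h), fun h ↦ hc.ne₀₁ (hjoin h hc.mem₁).symm⟩

theorem cut_sdiff_pair (hb : M.IsClaw b e₀ e₁ e₂) (hc : M.IsClaw c e₁ c₁ c₂)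
    (hR : M.cut R = {e₀, c₁}) (hbR : b ∈ R) (hcR : c ∈ R)
    (hbc : (M.cut {b} ∩ M.cut {c}).Subsingleton) : M.cut (R \ {b, c}) = {e₂, c₂} := by
  obtain ⟨he₂c, hc₂b, he₀c, hc₁b⟩ := hb.notMem_cut_of_subsingleton hc hbc
  have hbc : b ≠ c := fun h ↦ he₂c (h ▸ hb.mem₂)
  have hsymm : R \ {b, c} = R ∆ {b} ∆ {c} := by
    ext v
    simp only [mem_symmDiff, mem_sdiff, mem_insert_iff, mem_singleton_iff]
    grind
  obtain ⟨hb_cut, hb₀₁, hb₀₂, hb₁₂⟩ := hb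
  obtain ⟨hc_cut, hc₀₁, hc₀₂, hc₁₂⟩ := hc
  rw [hb_cut] at hc₂b hc₁b
  rw [hc_cut] at he₂c he₀c
  rw [hsymm, cut_symmDiff, cut_symmDiff, hR, hb_cut, hc_cut]
  ext e
  simp only [mem_symmDiff, mem_insert_iff, mem_singleton_iff] at *
  grind

end IsClaw

variable [Fintype E]

theorem boundary_comp_eq_zero [AddCommGroup A] [AddCommGroup B] {f : E → A} (φ : A →+ B)
    (hf : M.boundary f v = 0) : M.boundary (φ ∘ f) v = 0 := by
  rw [boundary_comp, comp_apply, hf, map_zero]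

/-- Entering the edge `bc` by `k₁` at `b` and `k₂` at `c`, the two values cross and leave by `c₁`
and `e₂`. -/
theorem IsClaw.exists_crossing [AddCommGroup A] [Module (ZMod 2) A]
    (hb : M.IsClaw b k₁ e₁ e₂) (hc : M.IsClaw c e₁ k₂ c₁)
    (hbc : (M.cut {b} ∩ M.cut {c}).Subsingleton) (f : E → A) :
    ∃ f' : E → A, M.boundary f' b = 0 ∧ M.boundary f' c = 0 ∧ f' e₂ = f k₂ ∧ f' c₁ = f k₁ ∧
      (∀ e, f' e = f e ∨ f' e = f k₁ ∨ f' e = f k₂ ∨ f' e = f k₁ + f k₂) ∧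
      ∀ e, e ≠ e₁ → e ≠ e₂ → e ≠ c₁ → f' e = f e := by
  classical
  obtain ⟨he₂c, -, hk₁c, hk₂b⟩ := hb.notMem_cut_of_subsingleton hc hbc
  have hce : e₂ ≠ c₁ := (he₂c <| · ▸ hc.mem₂)
  let f' : E → A := update (update (update f e₁ (f k₁ + f k₂)) e₂ (f k₂)) c₁ (f k₁)
  have hf'c₁ : f' c₁ = f k₁ := update_self ..
  have hf'e₂ : f' e₂ = f k₂ := by simp [f', hce]
  have hf'e₁ : f' e₁ = f k₁ + f k₂ := by simp [f', hc.ne₀₂, hb.ne₁₂]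
  have hf' e (h₁ : e ≠ e₁) (h₂ : e ≠ e₂) (hc₁ : e ≠ c₁) : f' e = f e := by simp [f', *]
  have hf'k₁ : f' k₁ = f k₁ := hf' _ hb.ne₀₁ hb.ne₀₂ (hk₁c <| · ▸ hc.mem₂)
  have hf'k₂ : f' k₂ = f k₂ := hf' _ hc.ne₀₁.symm (hk₂b <| · ▸ hb.mem₂) hc.ne₁₂
  refine ⟨f', ?_, ?_, hf'e₂, hf'c₁, fun e ↦ by grind, hf'⟩
  · rw [hb.boundary_apply, hf'k₁, hf'e₁, hf'e₂, add_assoc, add_assoc, ZModModule.add_self,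
      add_zero, ZModModule.add_self]
  · rw [hc.boundary_apply, hf'e₁, hf'k₂, hf'c₁, add_assoc, add_assoc, ← add_assoc (f k₂),
      ZModModule.add_self, zero_add, ZModModule.add_self]

variable (M) in
/-- The data from which a colouring of `X` is grown into `R`: a flow `f` on `X \ R` whose values on
the two edges of `M.cut R` disagree, so that it extends to no flow on `X`, but such that at the
outer end of `k₁` the value on `k₂` is also present. -/
structure IsSeed (X R : Set V) (k₁ k₂ : E) (f : E → Fano) : Prop where
  cut_eq : M.cut R = {k₁, k₂}
  ne_zero : ∀ e, f e ≠ 0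
  boundary_eq_zero : ∀ v ∈ X \ R, M.boundary f v = 0
  apply_ne : f k₁ ≠ f k₂
  apply_mem : ∀ v ∈ X \ R, k₁ ∈ M.cut {v} → f k₂ ∈ f '' M.cut {v}

namespace IsSeed

theorem mem₁ (hs : M.IsSeed X R k₁ k₂ f) : k₁ ∈ M.cut R := hs.cut_eq ▸ .inl rfl

theorem mem₂ (hs : M.IsSeed X R k₁ k₂ f) : k₂ ∈ M.cut R := hs.cut_eq ▸ .inr rfl

theorem parallelOn (hs : M.IsSeed X R k₁ k₂ f) : M.ParallelOn R k₁ k₂ := ⟨R, Subset.rfl, hs.cut_eq⟩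

theorem eq_or_eq (hs : M.IsSeed X R k₁ k₂ f) (hx : e ∈ M.cut {x}) (hy : e ∈ M.cut {y})
    (hxR : x ∈ R) (hyR : y ∉ R) : e = k₁ ∨ e = k₂ := by
  have h := mem_cut_of_mem_of_notMem hx hy hxR hyR
  rwa [hs.cut_eq] at h

theorem notMem_cut (hs : M.IsSeed X R k₁ k₂ f) (hR : M.IsBridgelessOn R)
    (hb : M.IsClaw b k₁ e₁ e₂) (hbR : b ∈ R) : e₁ ∉ M.cut R := by
  intro he
  rw [hs.cut_eq] at he
  obtain rfl := he.resolve_left hb.ne₀₁.symm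
  refine hR (R ∆ {b}) ?_ e₂ ?_
  · exact union_subset sdiff_subset (sdiff_subset.trans (singleton_subset_iff.2 hbR))
  · obtain ⟨hb_cut, -, h₀₂, h₁₂⟩ := hb
    rw [cut_symmDiff, hs.cut_eq, hb_cut]
    ext e
    simp only [mem_symmDiff, mem_insert_iff, mem_singleton_iff]
    grind

theorem exists_isClaw_of_isClaw (hs : M.IsSeed X R k₁ k₂ f) (hR : M.IsBridgelessOn R)
    (hcubic : M.IsCubicOn R) (hb : M.IsClaw b k₁ e₁ e₂) (hbR : b ∈ R) :
    ∃ c ∈ R, b ≠ c ∧ ∃ c₁ c₂, M.IsClaw c e₁ c₁ c₂ := by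
  obtain ⟨c, ⟨hcR, hcb⟩, hc⟩ := exists_mem_sdiff_of_mem_cut (singleton_subset_iff.2 hbR) hb.mem₁
    (hs.notMem_cut hR hb hbR)
  exact ⟨c, hcR, Ne.symm hcb, hcubic.exists_isClaw hcR hc⟩

theorem exists_of_cut_eq [Finite V] (hs : M.IsSeed X R k₁ k₂ f) (hR : M.IsBridgelessOn R)
    (hTR : T ⊆ R) (hg : k₁ ≠ g) (hT : M.cut T = {k₁, g}) : ∃ f', M.IsSeed X T k₁ g f' := by
  obtain ⟨u, hu, hu0⟩ := hR.exists_flow_ne_zero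
  obtain ⟨φ, hφ⟩ := exists_linearEquiv_fano (hu0 k₂) (hs.ne_zero k₂)
  have hφu0 e : (φ ∘ u) e ≠ 0 := by simpa using hu0 e
  obtain ⟨b, hbT, hb⟩ := exists_mem_cut_singleton (M := M) (R := T) (hT ▸ .inl rfl : k₁ ∈ M.cut T)
  obtain ⟨w, hwT, hgw⟩ := exists_mem_cut_singleton (M := M) (R := T) (hT ▸ .inr rfl : g ∈ M.cut T)
  obtain ⟨f', hf', hout, hin, hf'k₁, hf'b⟩ :=
    exists_glue f (φ ∘ u) hs.cut_eq (hTR hbT) hb hφ.symm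
  have hf'g : f' g = f k₂ := calc
    f' g = φ (u g) := by
      obtain rfl | hwb := eq_or_ne w b
      exacts [hf'b g hgw hg.symm, hin w (hTR hwT) hwb hgw]
    _ = φ (u k₁) := congrArg φ (ParallelOn.apply_eq ⟨T, hTR, hT⟩ hu).symm
    _ = f k₂ := by rw [hs.parallelOn.apply_eq hu, hφ]
  refine ⟨f', hT, fun e ↦ ?_, fun v hv ↦ ?_, ?_, fun v hv hkv ↦ ?_⟩
  · obtain h | h := hf' e
    exacts [h ▸ hs.ne_zero e, h ▸ hφu0 e]
  · by_cases hvR : v ∈ R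
    · rw [boundary_congr (hin v hvR fun h ↦ hv.2 (h ▸ hbT))]
      exact boundary_comp_eq_zero φ.toAddEquiv.toAddMonoidHom (hu v hvR)
    · rw [boundary_congr (hout v hvR)]
      exact hs.boundary_eq_zero v ⟨hv.1, hvR⟩
  · rw [hf'k₁, hf'g]
    exact hs.apply_ne
  · have hvR : v ∉ R := fun hvR ↦ hv.2 (eq_of_mem_cut hs.mem₁ hb hkv (hTR hbT) hvR ▸ hbT)
    rw [hf'g, (hout v hvR).image_eq]
    exact hs.apply_mem v ⟨hv.1, hvR⟩ hkv

theorem exists_of_isClaw (hs : M.IsSeed X R k₁ k₂ f) (hb : M.IsClaw b k₁ e₁ e₂)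
    (hc : M.IsClaw c e₁ k₂ c₁) (hbR : b ∈ R) (hcR : c ∈ R)
    (hbc : (M.cut {b} ∩ M.cut {c}).Subsingleton) :
    ∃ f', M.IsSeed X (R \ {b, c}) e₂ c₁ f' := by
  obtain ⟨he₂c, hc₁b, hk₁c, hk₂b⟩ := hb.notMem_cut_of_subsingleton hc hbc
  obtain ⟨f', hf'b, hf'c, hf'e₂, hf'c₁, hval, hf'⟩ := hb.exists_crossing hc hbc f
  have hf'k₁ : f' k₁ = f k₁ := hf' _ hb.ne₀₁ hb.ne₀₂ (hk₁c <| · ▸ hc.mem₂)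
  have hf'k₂ : f' k₂ = f k₂ := hf' _ hc.ne₀₁.symm (hk₂b <| · ▸ hb.mem₂) hc.ne₁₂
  have hout {v} (hv : v ∉ R) : EqOn f' f (M.cut {v}) := by
    intro e he
    by_cases hek : e = k₁ ∨ e = k₂
    · exact hek.elim (· ▸ hf'k₁) (· ▸ hf'k₂)
    have hnot {w} (hw : w ∈ R) : e ∉ M.cut {w} := fun hew ↦ hek (hs.eq_or_eq hew he hw hv)
    exact hf' _ (hnot hbR <| · ▸ hb.mem₁) (hnot hbR <| · ▸ hb.mem₂) (hnot hcR <| · ▸ hc.mem₂)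
  have hcases {v} (hv : v ∈ X \ (R \ {b, c})) : v ∈ X \ R ∨ v = b ∨ v = c := by grind
  refine ⟨f', hb.cut_sdiff_pair hc hs.cut_eq hbR hcR hbc, fun e ↦ ?_, fun v hv ↦ ?_, ?_,
    fun v hv hev ↦ ?_⟩
  · obtain h | h | h | h := hval e <;> rw [h]
    · exact hs.ne_zero e
    · exact hs.ne_zero k₁
    · exact hs.ne_zero k₂
    · rw [Ne, add_eq_zero_iff_eq_neg, ZModModule.neg_eq_self]
      exact hs.apply_ne
  · obtain hv | rfl | rfl := hcases hv
    · rw [boundary_congr (hout hv.2)]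
      exact hs.boundary_eq_zero v hv
    exacts [hf'b, hf'c]
  · rw [hf'e₂, hf'c₁]
    exact hs.apply_ne.symm
  · obtain hv | rfl | rfl := hcases hv
    · exact (hs.eq_or_eq hb.mem₂ hev hbR hv.2).elim (absurd · hb.ne₀₂.symm)
        fun h ↦ absurd hb.mem₂ (h ▸ hk₂b)
    · exact ⟨k₁, hb.mem₀, by rw [hf'k₁, hf'c₁]⟩
    · exact absurd hev he₂c

theorem exists_isLineThrough {k : E → Fano} {a : Fano} (hs : M.IsSeed X R k₁ k₂ f)
    (hX : M.IsCubicOn X) (hbR : b ∈ R) (hb : k₁ ∈ M.cut {b}) (hk : ∀ v ∈ R, M.boundary k v = 0)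
    (hk0 : ∀ e, k e ≠ 0) (ha0 : a ≠ 0) (ha : a ≠ k k₂) :
    ∃ col : E → Fano, (∀ e, col e ≠ 0) ∧ col k₁ = a ∧
      (∀ v ∈ X, v ≠ b → ∀ e ∈ M.cut {v}, IsLineThrough (col e) (col '' M.cut {v})) ∧
      (∀ e ∈ M.cut {b}, e ≠ k₁ → col e = k e) ∧
      (∀ v ∈ R, v ≠ b → EqOn col k (M.cut {v})) ∧
      ∀ v ∈ X \ R, k₁ ∈ M.cut {v} → k k₂ ∈ col '' M.cut {v} := by
  obtain ⟨φ, hφ₁, hφ₂⟩ := exists_linearEquiv_apply_eq (hs.ne_zero k₁) (hs.ne_zero k₂) hs.apply_ne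
    ha0 (hk0 k₂) ha
  obtain ⟨col, hcol, hout, hin, hcol₁, hcolb⟩ := exists_glue (φ ∘ f) k hs.cut_eq hbR hb hφ₂
  have hφf0 (e : E) : (φ ∘ f) e ≠ 0 := by simpa using hs.ne_zero e
  refine ⟨col, fun e ↦ ?_, hcol₁.trans hφ₁, fun v hv hvb e he ↦ ?_, hcolb, hin, fun v hv hkv ↦ ?_⟩
  · obtain h | h := hcol e
    exacts [h ▸ hφf0 e, h ▸ hk0 e]
  · by_cases hvR : v ∈ R
    · rw [(hin v hvR hvb).image_eq, hin v hvR hvb he]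
      exact hX.isLineThrough hk0 hv (hk v hvR) he
    · rw [(hout v hvR).image_eq, hout v hvR he]
      have hφf : M.boundary (φ ∘ f) v = 0 :=
        boundary_comp_eq_zero φ.toAddEquiv.toAddMonoidHom (hs.boundary_eq_zero v ⟨hv, hvR⟩)
      exact hX.isLineThrough hφf0 hv hφf he
  · rw [(hout v hv.2).image_eq, image_comp, ← hφ₂]
    exact mem_image_of_mem φ (hs.apply_mem v hv hkv)

variable [Finite V]

theorem exists_isNormalOn_of_flow {k : E → Fano} (hs : M.IsSeed X R k₁ k₂ f)
    (hX : M.IsCubicOn X) (hb : M.IsClaw b k₁ e₁ e₂) (hc : M.IsClaw c e₁ c₁ c₂)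
    (hd : M.IsClaw d e₂ d₁ d₂) (hbR : b ∈ R) (hcR : c ∈ R) (hdR : d ∈ R) (hbc : b ≠ c) (hbd : b ≠ d)
    (hk : ∀ v ∈ R, M.boundary k v = 0) (hk0 : ∀ e, k e ≠ 0) (hkb : ∀ e ∈ M.cut {b}, (k e).1 = 0)
    (hkc : (k c₁).1 ≠ 0) (hkd : (k d₁).1 ≠ 0) : ∃ col, M.IsNormalOn X col := by
  have hk₂ : k k₂ = k e₁ + k e₂ := by
    rw [← hs.parallelOn.apply_eq hk]
    exact hb.rotate.apply_eq_add (hk b hbR)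
  have hne : k e₁ ≠ k e₂ := fun h ↦ hk0 k₂ (by rw [hk₂, h, ZModModule.add_self])
  obtain ⟨a, ha0, ha, hcard, hac, had, hak⟩ := exists_isNormalPair _ _ _ _ (hk0 e₁) (hk0 e₂) hne
    (hkb _ hb.mem₁) (hkb _ hb.mem₂) hkc hkd
  rw [← hk₂] at ha hak
  obtain ⟨col, hcol0, hcol₁, hline, hcolb, hin, hout⟩ :=
    hs.exists_isLineThrough hX hbR hb.mem₀ hk hk0 ha0 ha
  have hcole₁ : col e₁ = k e₁ := hcolb _ hb.mem₁ hb.ne₀₁.symm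
  have hcole₂ : col e₂ = k e₂ := hcolb _ hb.mem₂ hb.ne₀₂.symm
  have himage : col '' M.cut {b} = ({a, k e₁, k e₂} : Finset Fano) := by
    rw [hb.image_cut, hcol₁, hcole₁, hcole₂]
    simp
  refine ⟨col, hX.isNormalOn (b := b) hcol0 hline ?_ fun w hw hbw e hbe hwe ↦ ?_⟩
  · rw [himage, ncard_coe_finset, hcard]
  have hwline := hline w hw hbw.symm e hwe
  rw [hb.cut_eq] at hbe
  rw [himage]
  obtain rfl | rfl | rfl := hbe
  · have hwR : w ∉ R := fun hwR ↦ hbw (eq_of_mem_cut hs.mem₁ hb.mem₀ hwe hbR hwR)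
    rw [hcol₁] at hwline
    rwa [hwline.eq_fanoLine (hout w ⟨hw, hwR⟩ hwe) ha.symm]
  · obtain rfl := eq_of_mem_cut_of_ne hb.mem₁ hwe hc.mem₀ hbw hbc
    rw [hcole₁] at hwline
    rwa [hwline.eq_fanoLine ⟨c₁, hc.mem₁, hin w hcR hbc.symm hc.mem₁⟩
      fun h ↦ hkc (h ▸ hkb _ hb.mem₁)]
  · obtain rfl := eq_of_mem_cut_of_ne hb.mem₂ hwe hd.mem₀ hbw hbd
    rw [hcole₂] at hwline
    rwa [hwline.eq_fanoLine ⟨d₁, hd.mem₁, hin w hdR hbd.symm hd.mem₁⟩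
      fun h ↦ hkd (h ▸ hkb _ hb.mem₂)]

theorem ne_and_not_parallelOn (hs : M.IsSeed X R k₁ k₂ f) (hR : M.IsBridgelessOn R)
    (hmin : ∀ T ⊂ R, ∀ g h f', ¬M.IsSeed X T g h f') (hsimple : M.IsSimpleOn R)
    (hb : M.IsClaw b k₁ e₁ e₂) (hc : M.IsClaw c e₁ g h) (hbR : b ∈ R) (hcR : c ∈ R) (hbc : b ≠ c) :
    k₁ ≠ g ∧ ¬M.ParallelOn R k₁ g := by
  have hk₁ : k₁ ≠ g := fun h ↦ hbc (eq_of_mem_cut hs.mem₁ hb.mem₀ (h ▸ hc.mem₁) hbR hcR)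
  have hk₂ : g ≠ k₂ := by
    rintro rfl
    obtain ⟨f', hs'⟩ := hs.exists_of_isClaw hb hc hbR hcR (hsimple b hbR c hcR hbc)
    exact hmin _ (ssubset_of_subset_of_ne sdiff_subset fun h ↦ (h ▸ hbR).2 (.inl rfl)) _ _ _ hs'
  refine ⟨hk₁, fun ⟨T, hTR, hT⟩ ↦ ?_⟩
  obtain ⟨f', hs'⟩ := hs.exists_of_cut_eq hR hTR hk₁ hT
  refine hmin T (ssubset_of_subset_of_ne hTR ?_) _ _ _ hs'
  rintro rfl
  have hg : g ∈ M.cut T := hs'.mem₂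
  rw [hs.cut_eq] at hg
  exact hg.elim hk₁.symm hk₂

theorem exists_isNormalOn_of_minimal (hs : M.IsSeed X R k₁ k₂ f) (hX : M.IsCubicOn X) (hRX : R ⊆ X)
    (hR : M.IsBridgelessOn R) (hsimple : M.IsSimpleOn R)
    (hmin : ∀ T ⊂ R, ∀ g h f', ¬M.IsSeed X T g h f') : ∃ col, M.IsNormalOn X col := by
  obtain ⟨b, hbR, hkb⟩ := exists_mem_cut_singleton hs.mem₁
  obtain ⟨e₁, e₂, hb⟩ := hX.exists_isClaw (hRX hbR) hkb
  have hcubic : M.IsCubicOn R := fun v hv ↦ hX v (hRX hv)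
  obtain ⟨c, hcR, hbc, c₁, c₂, hc⟩ := hs.exists_isClaw_of_isClaw hR hcubic hb hbR
  obtain ⟨d, hdR, hbd, d₁, d₂, hd⟩ := hs.exists_isClaw_of_isClaw hR hcubic hb.swap hbR
  have hcd : c ≠ d := by
    rintro rfl
    exact hb.ne₁₂ (hsimple b hbR c hcR hbc ⟨hb.mem₁, hc.mem₀⟩ ⟨hb.mem₂, hd.mem₀⟩)
  have hne {e e' c g h} (hb : M.IsClaw b k₁ e e') (hc : M.IsClaw c e g h) (hcR : c ∈ R)
      (hbc : b ≠ c) : k₁ ≠ g ∧ ¬M.ParallelOn R k₁ g :=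
    hs.ne_and_not_parallelOn hR hmin hsimple hb hc hbR hcR hbc
  obtain ⟨k, hk, hk0, hkb, hkg⟩ := hb.exists_flowOn hR hc hd hbR hcR hdR hbc hbd hcd <| by
    rintro g (rfl | rfl | rfl | rfl)
    exacts [hne hb hc hcR hbc, hne hb hc.swap hcR hbc, hne hb.swap hd hdR hbd,
      hne hb.swap hd.swap hdR hbd]
  exact hs.exists_isNormalOn_of_flow hX hb hc hd hbR hcR hdR hbc hbd hk hk0 hkb
    (hkg c₁ (by simp)) (hkg d₁ (by simp))

theorem exists_isNormalOn (hs : M.IsSeed X R k₁ k₂ f) (hX : M.IsCubicOn X) (hRX : R ⊆ X)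
    (hR : M.IsBridgelessOn R) (hsimple : M.IsSimpleOn R) : ∃ col, M.IsNormalOn X col := by
  induction R using WellFoundedLT.induction generalizing k₁ k₂ f with
  | ind R ih =>
    by_cases hmin : ∀ T ⊂ R, ∀ g h f', ¬M.IsSeed X T g h f'
    · exact hs.exists_isNormalOn_of_minimal hX hRX hR hsimple hmin
    · push Not at hmin
      obtain ⟨T, hTR, g, h, f', hs'⟩ := hmin
      exact ih T hTR hs' (hTR.subset.trans hRX) (fun U hU ↦ hR U (hU.trans hTR.subset))
        fun v hv w hw ↦ hsimple v (hTR.subset hv) w (hTR.subset hw)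

end IsSeed

end Seed

theorem IsClaw.exists_isNormalOn_insert [Finite V] [Finite E] {r : V} {k₁ k₂ : E}
    (hr : M.IsClaw r k₁ k₂ e) (hcut : M.cut R = {k₁, k₂}) (hX : M.IsCubicOn (insert r R))
    (hR : M.IsBridgelessOn R) (hsimple : M.IsSimpleOn R) :
    ∃ col, M.IsNormalOn (insert r R) col := by
  cases nonempty_fintype E
  classical
  let f : E → Fano := update (update (fun _ ↦ (1, 1, 0)) k₂ (0, 1, 0)) k₁ (1, 0, 0)
  have hfk₁ : f k₁ = (1, 0, 0) := update_self ..
  have hfk₂ : f k₂ = (0, 1, 0) := by simp [f, hr.ne₀₁.symm]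
  have hfe : f e = (1, 1, 0) := by simp [f, hr.ne₀₂.symm, hr.ne₁₂.symm]
  have hv {v} (hv : v ∈ insert r R \ R) : v = r := hv.1.resolve_right hv.2
  have hs : M.IsSeed (insert r R) R k₁ k₂ f := by
    refine ⟨hcut, fun e ↦ ?_, fun v hvX ↦ ?_, ?_, fun v hvX _ ↦ ?_⟩
    · simp only [f, update_apply]
      split_ifs <;> decide
    · rw [hv hvX, hr.boundary_apply, hfk₁, hfk₂, hfe]
      decide
    · rw [hfk₁, hfk₂]
      decide
    · exact ⟨k₂, hv hvX ▸ hr.mem₁, rfl⟩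
  exact hs.exists_isNormalOn hX (subset_insert r R) hR hsimple

/-! ### Components -/

section Components

variable {e₀ e₁ e₂ : E}

theorem IsClaw.cut_sdiff_singleton (hv : M.IsClaw v e₀ e₁ e₂) (hvX : v ∈ X) (hX : M.cut X = {e₀}) :
    M.cut (X \ {v}) = {e₁, e₂} := by
  have hsymm : X \ {v} = X ∆ {v} := by
    ext w
    simp only [mem_symmDiff, mem_sdiff, mem_singleton_iff]
    grind
  obtain ⟨hv_cut, h₀₁, h₀₂, -⟩ := hv
  rw [hsymm, cut_symmDiff, hX, hv_cut]
  ext e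
  simp only [mem_symmDiff, mem_insert_iff, mem_singleton_iff]
  grind

variable (M) in
/-- Every bridge that cuts off a subset of `X` is the edge at a vertex of degree `1` outside `X`. -/
def HasPendantBridges (X : Set V) : Prop :=
  ∀ T ⊆ X, ∀ g, M.cut T = {g} → ∃ l ∉ X, M.cut {l} = {g}

theorem HasPendantBridges.isBridgelessOn_sdiff (hbr : M.HasPendantBridges X) (hX : M.cut X = {g})
    (hv : g ∈ M.cut {v}) (hvX : v ∈ X) : M.IsBridgelessOn (X \ {v}) := by
  intro U hU e he
  obtain ⟨l, hlX, hl⟩ := hbr U (hU.trans sdiff_subset) e he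
  obtain ⟨w, hw, hew⟩ := exists_mem_cut_singleton (M := M) (he ▸ rfl : e ∈ M.cut U)
  have heX : e ∈ M.cut X := mem_cut_of_mem_of_notMem hew (hl ▸ rfl : e ∈ M.cut {l}) (hU hw).1 hlX
  obtain rfl : e = g := by rwa [hX] at heX
  exact (hU hw).2 (eq_of_mem_cut heX hew hv (hU hw).1 hvX)

variable [Finite V] [Finite E]

theorem IsCubicOn.exists_isNormalOn_of_connected (hX : M.IsCubicOn X) (hsimple : M.IsSimpleOn X)
    (hbr : M.HasPendantBridges X)
    (hconn : ∀ S, M.cut S = ∅ → (X ∩ S).Nonempty → X ⊆ S) : ∃ col, M.IsNormalOn X col := by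
  by_cases hM : M.IsBridgelessOn X
  · exact hM.exists_isNormalOn hX
  obtain ⟨T, hTX, g, hT⟩ : ∃ T ⊆ X, ∃ g, M.cut T = {g} := by
    simpa only [IsBridgelessOn, not_forall, not_not, exists_prop] using hM
  obtain ⟨l, hlX, hl⟩ := hbr T hTX g hT
  obtain ⟨r, hrT, hr⟩ := exists_mem_cut_singleton (M := M) (hT ▸ rfl : g ∈ M.cut T)
  have hne {v} (hv : v ∈ X) : v ∉ ({l} : Set V) := fun h ↦ hlX (h ▸ hv)
  have hXT : X ⊆ T ∆ {l} := hconn _ (by rw [cut_symmDiff, hT, hl, symmDiff_self, bot_eq_empty])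
    ⟨r, hTX hrT, .inl ⟨hrT, hne (hTX hrT)⟩⟩
  obtain rfl : T = X :=
    hTX.antisymm fun v hv ↦ (hXT hv).elim And.left fun h ↦ absurd h.1 (hne hv)
  obtain ⟨e₁, e₂, hclaw⟩ := hX.exists_isClaw hrT hr
  have hcol := hclaw.rotate.exists_isNormalOn_insert (hclaw.cut_sdiff_singleton hrT hT)
    (by rwa [insert_sdiff_self_of_mem hrT]) (hbr.isBridgelessOn_sdiff hT hr hrT)
    fun v hv w hw ↦ hsimple v hv.1 w hw.1
  rwa [insert_sdiff_self_of_mem hrT] at hcol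

theorem IsCubicOn.exists_isNormalOn (hX : M.IsCubicOn X) (hsimple : M.IsSimpleOn X)
    (hbr : M.HasPendantBridges X) : ∃ col, M.IsNormalOn X col := by
  let comp (v : V) : Quotient (M.linkedSetoid univ) := Quotient.mk _ v
  have hpart (q) : ∃ col, M.IsNormalOn (X ∩ comp ⁻¹' {q}) col := by
    refine IsCubicOn.exists_isNormalOn_of_connected (fun v hv ↦ hX v hv.1)
      (fun v hv w hw ↦ hsimple v hv.1 w hw.1) (fun T hT g hg ↦ ?_) fun S hS ⟨x, hx, hxS⟩ v hv ↦ ?_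
    · obtain ⟨l, hl, hlg⟩ := hbr T (hT.trans inter_subset_left) g hg
      exact ⟨l, fun h ↦ hl h.1, hlg⟩
    · have hxv : M.Linked univ x v := Quotient.exact (hx.2.trans hv.2.symm)
      exact (hxv.mem_iff (hS ▸ disjoint_empty _)).1 hxS
  choose col hcol using hpart
  have heq {v} : EqOn (fun e ↦ col (comp (M.src e)) e) (col (comp v)) (M.cut {v}) := by
    intro e he
    have hsrc : comp (M.src e) = comp v := by
      by_cases h : M.src e = v
      · rw [h]
      · obtain rfl : M.tgt e = v := by
          simp only [mem_cut, mem_singleton_iff] at he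
          tauto
        exact Quotient.sound (Linked.of_mem (mem_univ e))
    exact congrFun (congrArg col hsrc) e
  refine ⟨fun e ↦ col (comp (M.src e)) e, fun e ↦ (hcol _).ne_zero e, fun v hv ↦ ?_,
    fun v hv w hw hvw e hev hew ↦ ?_⟩
  · rw [heq.image_eq]
    exact (hcol _).ncard_eq_three v ⟨hv, rfl⟩
  · have hcomp : comp w = comp v := Quotient.sound (Linked.of_mem_cut (mem_univ e) hew hev)
    rw [heq.image_eq, heq.image_eq, hcomp]
    exact (hcol _).isNormalPair v ⟨hv, rfl⟩ w ⟨hw, hcomp⟩ hvw e hev hew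

end Components

/-! ### Simple graphs -/

section OfGraph

variable {V : Type*} {G : SimpleGraph V} {R X : Set V} {u v : V}

variable (G) in
/-- A simple graph as a multigraph on its own edges, with arbitrarily chosen directions. -/
noncomputable def ofGraph : Multigraph V G.edgeSet := ⟨fun e ↦ e.1.out.1, fun e ↦ e.1.out.2⟩

theorem mem_cut_ofGraph {h : s(u, v) ∈ G.edgeSet} :
    (⟨s(u, v), h⟩ : G.edgeSet) ∈ (ofGraph G).cut R ↔ ¬(u ∈ R ↔ v ∈ R) := by
  have hout : s(s(u, v).out.1, s(u, v).out.2) = s(u, v) := Quot.out_eq _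
  obtain ⟨hu, hv⟩ | ⟨hu, hv⟩ := Sym2.eq_iff.1 hout
  · simp only [mem_cut, ofGraph, hu, hv]
  · simp only [mem_cut, ofGraph, hu, hv, iff_comm]

theorem cut_ofGraph_singleton : (ofGraph G).cut {v} = {e | v ∈ e.1} := by
  ext ⟨e, he⟩
  induction e with | h a b =>
  have hab : a ≠ b := he.ne
  rw [mem_cut_ofGraph, mem_ofPred_eq, Sym2.mem_iff]
  grind

theorem image_val_cut_ofGraph_singleton :
    Subtype.val '' (ofGraph G).cut {v} = G.incidenceSet v := by
  rw [cut_ofGraph_singleton]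
  exact Subtype.image_preimage_coe G.edgeSet {e | v ∈ e}

theorem ncard_cut_ofGraph_singleton : ((ofGraph G).cut {v}).ncard = (G.neighborSet v).ncard := by
  classical
  rw [← ncard_image_of_injective _ Subtype.val_injective, image_val_cut_ofGraph_singleton]
  exact ncard_congr' (G.incidenceSetEquivNeighborSet v)

theorem isCubicOn_ofGraph : (ofGraph G).IsCubicOn {v | (G.neighborSet v).ncard = 3} := by
  intro v hv
  obtain ⟨e₀, e₁, e₂, h₀₁, h₀₂, h₁₂, hcut⟩ :=
    ncard_eq_three.1 (ncard_cut_ofGraph_singleton.trans hv)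
  exact ⟨e₀, e₁, e₂, hcut, h₀₁, h₀₂, h₁₂⟩

theorem isSimpleOn_ofGraph : (ofGraph G).IsSimpleOn X := by
  intro v _ w _ hvw e he g hg
  rw [cut_ofGraph_singleton, cut_ofGraph_singleton] at he hg
  exact Subtype.ext (((Sym2.mem_and_mem_iff hvw).1 he).trans ((Sym2.mem_and_mem_iff hvw).1 hg).symm)

theorem isBridge_of_cut_ofGraph_eq {g : G.edgeSet} (hg : (ofGraph G).cut R = {g}) :
    G.IsBridge g.1 := by
  obtain ⟨e, he⟩ := g
  induction e with | h a b =>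
  have hcross {u v} (huv : G.Adj u v) (h : ¬(u ∈ R ↔ v ∈ R)) : s(u, v) = s(a, b) := by
    have hmem := mem_cut_ofGraph (h := huv).2 h
    rw [hg] at hmem
    exact congrArg Subtype.val hmem
  have hab : ¬(a ∈ R ↔ b ∈ R) := mem_cut_ofGraph.1 (hg.symm.subset rfl)
  have hiff {u v} (p : (G.deleteEdges {s(a, b)}).Walk u v) (hu : u ∈ R) : v ∈ R := by
    by_contra hv
    obtain ⟨d, -, hd, hd'⟩ := p.exists_boundary_dart R hu hv
    have hadj := deleteEdges_adj.1 d.adj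
    exact hadj.2 (hcross hadj.1 (by tauto))
  rintro ⟨p⟩
  exact hab ⟨hiff p, hiff p.reverse⟩

theorem hasPendantBridges_ofGraph
    (hbr : ∀ e ∈ G.edgeSet, G.IsBridge e → ∃ v ∈ e, (G.neighborSet v).ncard = 1) :
    (ofGraph G).HasPendantBridges {v | (G.neighborSet v).ncard = 3} := by
  intro T _ g hg
  obtain ⟨l, hlg, hl⟩ := hbr g g.2 (isBridge_of_cut_ofGraph_eq hg)
  refine ⟨l, by simp [hl], ?_⟩
  obtain ⟨g', hg'⟩ := ncard_eq_one.1 (ncard_cut_ofGraph_singleton.trans hl)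
  have hmem : g ∈ (ofGraph G).cut {l} := cut_ofGraph_singleton ▸ hlg
  rw [hg'] at hmem ⊢
  rw [hmem]

theorem exists_injOn_fin_seven : ∃ ι : Fano → Fin 7, InjOn ι {0}ᶜ := by
  have hbinary : ∀ a b : Fano, a ≠ 0 → b ≠ 0 →
      Fin.ofNat 7 (a.1.val + 2 * a.2.1.val + 4 * a.2.2.val) =
        Fin.ofNat 7 (b.1.val + 2 * b.2.1.val + 4 * b.2.2.val) → a = b := by decide
  exact ⟨_, fun a ha b hb ↦ hbinary a b ha hb⟩

variable {C : Type*} {c : Sym2 V → C}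

theorem colorSet_eq_image : colorSet G c v = (fun e : G.edgeSet ↦ c e) '' (ofGraph G).cut {v} := by
  rw [colorSet, ← image_val_cut_ofGraph_singleton, image_image]

theorem isProperEdgeColoring_of_injOn
    (hc : ∀ v, InjOn (fun e : G.edgeSet ↦ c e) ((ofGraph G).cut {v})) :
    IsProperEdgeColoring G c := by
  rintro e he f hf hef ⟨v, hve, hvf⟩ hcef
  have hv := hc v
  rw [cut_ofGraph_singleton] at hv
  exact hef (congrArg Subtype.val (@hv ⟨e, he⟩ hve ⟨f, hf⟩ hvf hcef))

theorem IsNormalPair.image {α β : Type*} {Y Z s : Set α} {ι : α → β} (h : IsNormalPair Y Z)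
    (hι : InjOn ι s) (hY : Y ⊆ s) (hZ : Z ⊆ s) : IsNormalPair (ι '' Y) (ι '' Z) := by
  rwa [IsNormalPair, ← image_union, (hι.mono (union_subset hY hZ)).ncard_image]

theorem IsNormalOn.injOn {col : G.edgeSet → Fano}
    (hcol : (ofGraph G).IsNormalOn {v | (G.neighborSet v).ncard = 3} col)
    (hdeg : ∀ v, (G.neighborSet v).ncard = 1 ∨ (G.neighborSet v).ncard = 3) :
    InjOn col ((ofGraph G).cut {v}) := by
  obtain hv | hv := hdeg v
  · obtain ⟨e, he⟩ := ncard_eq_one.1 (ncard_cut_ofGraph_singleton.trans hv)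
    exact he ▸ injOn_singleton ..
  · have hcard : ((ofGraph G).cut {v}).ncard = 3 := ncard_cut_ofGraph_singleton.trans hv
    refine injOn_of_ncard_image_eq ?_ (finite_of_ncard_ne_zero (by simp [hcard]))
    rw [hcol.ncard_eq_three v hv, hcard]

end OfGraph
end Multigraph

open Multigraph

theorem stmt_14 {V : Type*} [Fintype V] (G : SimpleGraph V)
    (hdeg : ∀ v : V, (G.neighborSet v).ncard = 1 ∨ (G.neighborSet v).ncard = 3)
    (hbr : ∀ e ∈ G.edgeSet, G.IsBridge e → ∃ v ∈ e, (G.neighborSet v).ncard = 1) :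
    ∃ c : Sym2 V → Fin 7,
      IsProperEdgeColoring G c ∧
      ∀ u v : V, G.Adj u v → (G.neighborSet u).ncard = 3 → (G.neighborSet v).ncard = 3 →
        IsPoorAt G c u v ∨ IsRichAt G c u v := by
  classical
  obtain ⟨col, hcol⟩ :=
    isCubicOn_ofGraph.exists_isNormalOn isSimpleOn_ofGraph (hasPendantBridges_ofGraph hbr)
  obtain ⟨ι, hι⟩ := exists_injOn_fin_seven
  have hcol0 {s : Set G.edgeSet} : MapsTo col s {0}ᶜ := fun e _ ↦ hcol.ne_zero e
  let c : Sym2 V → Fin 7 := extend Subtype.val (ι ∘ col) 0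
  have hc : (fun e : G.edgeSet ↦ c e) = ι ∘ col := extend_comp Subtype.val_injective ..
  refine ⟨c, isProperEdgeColoring_of_injOn fun v ↦ ?_, fun u v huv hu hv ↦ ?_⟩
  · rw [hc]
    exact hι.comp (hcol.injOn hdeg) hcol0
  · have hpair := hcol.isNormalPair u hu v hv huv.ne ⟨s(u, v), huv⟩
      (cut_ofGraph_singleton ▸ Sym2.mem_mk_left u v) (cut_ofGraph_singleton ▸ Sym2.mem_mk_right u v)
    have himage := hpair.image hι hcol0.image_subset hcol0.image_subset
    rwa [← image_comp, ← image_comp, ← hc, ← colorSet_eq_image, ← colorSet_eq_image] at himage
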